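/- For every real number q with 0 < q < 1, the function q ↦ −(1 + k(q)^2)/(1 + k(q) − k(q)^2) is differentiable at q with derivative equal to E(q)^8 E(q^{10})^3 / E(q^2)^7. -/

import Mathlib

open Real

/-- Euler's product `E(q) = ∏_{j=1}^∞ (1 - q^j)`. -/
noncomputable def eulerE (q : ℝ) : ℝ := ∏' j : ℕ, (1 - q ^ (j + 1))

/-- Ramanujan's level-10 function `k(q)`. -/
noncomputable def ramK (q : ℝ) : ℝ :=
  q * ∏' j : ℕ,
    ((1 - q ^ (10 * j + 1)) * (1 - q ^ (10 * j + 2)) * (1 - q ^ (10 * j + 8)) *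
        (1 - q ^ (10 * j + 9))) /
      ((1 - q ^ (10 * j + 3)) * (1 - q ^ (10 * j + 4)) * (1 - q ^ (10 * j + 6)) *
        (1 - q ^ (10 * j + 7)))


noncomputable def PP (q : ℝ) (x : ℂ) : ℂ := ∏' j : ℕ, (1 - x * (q : ℂ) ^ j)

lemma PP_summable {q : ℝ} (h0 : 0 < q) (h1 : q < 1) (x : ℂ) :
    Summable (fun j : ℕ => ‖-(x * (q : ℂ) ^ j)‖) := by
  have : (fun j : ℕ => ‖-(x * (q : ℂ) ^ j)‖) = fun j : ℕ => ‖x‖ * q ^ j := by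
    ext j; simp [abs_of_pos h0]
  rw [this]
  exact (summable_geometric_of_lt_one h0.le h1).mul_left _

lemma PP_mult {q : ℝ} (h0 : 0 < q) (h1 : q < 1) (x : ℂ) :
    Multipliable (fun j : ℕ => 1 - x * (q : ℂ) ^ j) := by
  simpa [sub_eq_add_neg] using multipliable_one_add_of_summable (PP_summable h0 h1 x)

lemma PP_ne_zero {q : ℝ} (h0 : 0 < q) (h1 : q < 1) (x : ℂ) (hx : ∀ j : ℕ, x * (q : ℂ) ^ j ≠ 1) :
    PP q x ≠ 0 := by
  have := tprod_one_add_ne_zero_of_summable (f := fun j : ℕ => -(x * (q : ℂ) ^ j))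
    (fun j => by
      have := hx j
      intro h; apply this; linear_combination -h) (PP_summable h0 h1 x)
  simpa [PP, sub_eq_add_neg] using this

lemma PP_ne_zero_of_norm {q : ℝ} (h0 : 0 < q) (h1 : q < 1) (x : ℂ) (hx : ‖x‖ < 1) :
    PP q x ≠ 0 := by
  apply PP_ne_zero h0 h1
  intro j h
  have h2 : ‖x * (q : ℂ) ^ j‖ = 1 := by rw [h]; simp
  rw [norm_mul, norm_pow, Complex.norm_real, Real.norm_eq_abs, abs_of_pos h0] at h2
  have : q ^ j ≤ 1 := pow_le_one₀ h0.le h1.le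
  have h3 : 0 < q ^ j := by positivity
  nlinarith [norm_nonneg x]

lemma PP_succ {q : ℝ} (h0 : 0 < q) (h1 : q < 1) (x : ℂ) : PP q x = (1 - x) * PP q (x * q) := by
  have h := (PP_mult h0 h1 x)
  have h' : Multipliable (fun j : ℕ => 1 - x * (q : ℂ) ^ (j+1)) := by
    simpa [mul_assoc, pow_succ'] using PP_mult h0 h1 (x * q)
  have h2 := tprod_eq_zero_mul' (f := fun j : ℕ => 1 - x * (q : ℂ) ^ j) h'
  have h3 : ∏' j : ℕ, (1 - x * (q : ℂ) ^ (j+1)) = PP q (x * q) :=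
    tprod_congr fun j => by ring
  rw [h3, pow_zero, mul_one] at h2
  exact h2

lemma PP_mul_neg {q : ℝ} (h0 : 0 < q) (h1 : q < 1) (x : ℂ) :
    PP q x * PP q (-x) = PP (q ^ 2) (x ^ 2) := by
  unfold PP
  rw [← (PP_mult h0 h1 x).tprod_mul (PP_mult h0 h1 (-x))]
  congr 1; ext j; push_cast; ring

/-- dissection -/
lemma PP_dissect {q : ℝ} (h0 : 0 < q) (h1 : q < 1) (x : ℂ) (N : ℕ) (hN : 0 < N) :
    PP q x = ∏ i ∈ Finset.range N, PP (q ^ N) (x * (q : ℂ) ^ i) := by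
  have hq0 : 0 < q ^ N := by positivity
  have hq1 : q ^ N < 1 := pow_lt_one₀ h0.le h1 hN.ne'
  have hL := (PP_mult h0 h1 x).hasProd.tendsto_prod_nat
  have hL2 := hL.comp (Filter.tendsto_id.const_mul_atTop' hN)
  have hR : Filter.Tendsto (fun m : ℕ => ∏ i ∈ Finset.range N, ∏ j ∈ Finset.range m,
      (1 - x * (q : ℂ) ^ i * ((q ^ N : ℝ) : ℂ) ^ j)) Filter.atTop
      (nhds (∏ i ∈ Finset.range N, PP (q ^ N) (x * (q : ℂ) ^ i))) :=
    tendsto_finsetProd _ fun i _ => (PP_mult hq0 hq1 _).hasProd.tendsto_prod_nat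
  refine tendsto_nhds_unique hL2 (hR.congr fun m => ?_)
  simp only [Function.comp, id]
  induction m with
  | zero => simp
  | succ m ih =>
    simp only [Finset.prod_range_succ _ m, Finset.prod_mul_distrib]
    rw [ih, Nat.mul_succ, Finset.prod_range_add]
    congr 1
    apply Finset.prod_congr rfl
    intro i _
    push_cast
    ring

lemma PP_diff {q : ℝ} (h0 : 0 < q) (h1 : q < 1) : Differentiable ℂ (PP q) := by
  intro x0
  have hm : MultipliableLocallyUniformlyOn (fun (j : ℕ) (x : ℂ) => 1 - x * (q : ℂ) ^ j)
      (Metric.ball (0 : ℂ) (‖x0‖ + 1)) := by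
    have := Summable.multipliableLocallyUniformlyOn_nat_one_add
      (f := fun (j : ℕ) (x : ℂ) => -(x * (q : ℂ) ^ j)) (K := Metric.ball (0 : ℂ) (‖x0‖ + 1))
      (u := fun j => (‖x0‖ + 1) * q ^ j) Metric.isOpen_ball
      ((summable_geometric_of_lt_one h0.le h1).mul_left _) (.of_forall fun j x hx => by
        simp only [norm_neg, norm_mul, norm_pow, Complex.norm_real, Real.norm_eq_abs, abs_of_pos h0]
        gcongr
        exact (mem_ball_zero_iff.mp hx).le) (fun j => by fun_prop)
    simpa [sub_eq_add_neg] using this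
  have hd : DifferentiableOn ℂ (PP q) (Metric.ball (0 : ℂ) (‖x0‖ + 1)) :=
    hm.hasProdLocallyUniformlyOn.differentiableOn
    (.of_forall fun _ ↦ by simpa [Finset.prod_fn] using
      DifferentiableOn.finsetProd (fun _ _ ↦ by fun_prop)) Metric.isOpen_ball
  exact hd.differentiableAt (Metric.isOpen_ball.mem_nhds (by simp))

noncomputable def EE (q : ℝ) : ℂ := PP q q

lemma EE_ne {q : ℝ} (h0 : 0 < q) (h1 : q < 1) : EE q ≠ 0 :=
  PP_ne_zero_of_norm h0 h1 _ (by simp [abs_of_pos h0, h1])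

/-- theta product -/
noncomputable def TH (q : ℝ) (x : ℂ) : ℂ := PP q x * PP q (q / x)



lemma eulerE_mult {q : ℝ} (h0 : 0 < q) (h1 : q < 1) :
    Multipliable (fun j : ℕ => 1 - q ^ (j + 1)) := by
  have := multipliable_one_add_of_summable (f := fun j : ℕ => -(q ^ (j+1))) (by
    have := ((summable_geometric_of_lt_one h0.le h1).mul_left q)
    refine this.congr fun j => ?_
    simp [abs_of_pos h0, pow_succ'])
  simpa [sub_eq_add_neg] using this

lemma EE_eq {q : ℝ} (h0 : 0 < q) (h1 : q < 1) : EE q = (eulerE q : ℂ) := by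
  have h := (PP_mult h0 h1 q).hasProd.tendsto_prod_nat
  have h2 := (eulerE_mult h0 h1).hasProd.tendsto_prod_nat
  have h3 := (Complex.continuous_ofReal.tendsto _).comp h2
  refine tendsto_nhds_unique h (h3.congr fun n => ?_)
  simp only [Function.comp]
  push_cast
  exact Finset.prod_congr rfl fun j _ => by ring

noncomputable def qfac (q : ℝ) (n : ℕ) : ℝ := ∏ j ∈ Finset.range n, (1 - q ^ (j + 1))

lemma qfac_succ (q : ℝ) (n : ℕ) : qfac q (n+1) = qfac q n * (1 - q ^ (n + 1)) := by
  simp [qfac, Finset.prod_range_succ]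

lemma qfac_pos {q : ℝ} (h0 : 0 < q) (h1 : q < 1) (n : ℕ) : 0 < qfac q n := by
  apply Finset.prod_pos
  intro j _
  have : q ^ (j+1) < 1 := pow_lt_one₀ h0.le h1 (by omega)
  linarith

lemma qfac_tendsto {q : ℝ} (h0 : 0 < q) (h1 : q < 1) :
    Filter.Tendsto (qfac q) Filter.atTop (nhds (eulerE q)) :=
  (eulerE_mult h0 h1).hasProd.tendsto_prod_nat

lemma qfac_anti {q : ℝ} (h0 : 0 < q) (h1 : q < 1) : Antitone (qfac q) := by
  apply antitone_nat_of_succ_le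
  intro n
  rw [qfac_succ]
  have := qfac_pos h0 h1 n
  have h : 0 < q ^ (n+1) := by positivity
  nlinarith

lemma qfac_ge {q : ℝ} (h0 : 0 < q) (h1 : q < 1) (n : ℕ) : eulerE q ≤ qfac q n :=
  (qfac_anti h0 h1).le_of_tendsto (qfac_tendsto h0 h1) n

lemma qfac_le {q : ℝ} (h0 : 0 < q) (h1 : q < 1) (n : ℕ) : qfac q n ≤ 1 := by
  simpa [qfac] using qfac_anti h0 h1 (Nat.zero_le n)

lemma eulerE_pos {q : ℝ} (h0 : 0 < q) (h1 : q < 1) : 0 < eulerE q := by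
  have h := EE_ne h0 h1
  rw [EE_eq h0 h1] at h
  have h2 : 0 ≤ eulerE q := ge_of_tendsto' (qfac_tendsto h0 h1) fun n => (qfac_pos h0 h1 n).le
  exact lt_of_le_of_ne h2 (by exact_mod_cast h.symm)

noncomputable def rfac (q : ℝ) (m : ℤ) : ℝ := if m < 0 then 0 else (qfac q m.toNat)⁻¹

lemma rfac_rec {q : ℝ} (h0 : 0 < q) (h1 : q < 1) (m : ℤ) :
    rfac q (m - 1) = (1 - q ^ m) * rfac q m := by
  unfold rfac
  rcases lt_trichotomy m 0 with h | h | h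
  · simp [h, show m - 1 < 0 by omega]
  · subst h; simp
  · obtain ⟨n, rfl⟩ : ∃ n : ℕ, m = (n : ℤ) + 1 := ⟨(m-1).toNat, by omega⟩
    have e1 : ((n : ℤ) + 1 - 1).toNat = n := by omega
    have e2 : ((n : ℤ) + 1).toNat = n + 1 := by omega
    rw [e1, e2, qfac_succ, if_neg (by omega), if_neg (by omega)]
    have hp := (qfac_pos h0 h1 n).ne'
    have hp2 := (qfac_pos h0 h1 (n+1)).ne'
    rw [qfac_succ] at hp2
    have e3 : q ^ ((n:ℤ)+1) = q ^ (n+1) := by exact_mod_cast zpow_natCast q (n+1)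
    rw [e3]
    have := right_ne_zero_of_mul hp2
    field_simp

lemma rfac_nonneg {q : ℝ} (h0 : 0 < q) (h1 : q < 1) (m : ℤ) : 0 ≤ rfac q m := by
  unfold rfac; split_ifs
  · exact le_rfl
  · exact inv_nonneg.mpr (qfac_pos h0 h1 _).le

lemma rfac_le {q : ℝ} (h0 : 0 < q) (h1 : q < 1) (m : ℤ) : rfac q m ≤ (eulerE q)⁻¹ := by
  have := eulerE_pos h0 h1
  unfold rfac; split_ifs
  · positivity
  · exact inv_anti₀ this (qfac_ge h0 h1 _)

def tri (k : ℤ) : ℤ := k * (k - 1) / 2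

lemma two_tri (k : ℤ) : 2 * tri k = k * (k - 1) := by
  unfold tri
  exact Int.mul_ediv_cancel' (Int.even_mul_pred_self k).two_dvd

lemma tri_succ (k : ℤ) : tri (k + 1) = tri k + k := by
  have h1 := two_tri k
  have h2 := two_tri (k+1)
  linarith

lemma tri_nonneg (k : ℤ) : 0 ≤ tri k := by
  have h1 := two_tri k
  rcases le_or_gt k 0 with h | h <;> nlinarith

noncomputable def uu (q : ℝ) (k : ℤ) : ℝ := (-1) ^ k * q ^ tri k

lemma uu_succ {q : ℝ} (h0 : 0 < q) (k : ℤ) : uu q (k + 1) = - q ^ k * uu q k := by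
  unfold uu
  rw [tri_succ, zpow_add₀ h0.ne', zpow_add₀ (by norm_num)]
  ring

noncomputable def acf (q : ℝ) (n : ℕ) (k : ℤ) : ℝ :=
  uu q k * (qfac q (2 * n) * rfac q (n + k) * rfac q (n - k))

lemma acf_rec {q : ℝ} (h0 : 0 < q) (h1 : q < 1) (n : ℕ) (k : ℤ) :
    acf q (n + 1) k = (1 + q ^ (2 * n + 1)) * acf q n k - q ^ n * acf q n (k - 1)
      - q ^ (n + 1) * acf q n (k + 1) := by
  unfold acf
  have e1 : rfac q ((n : ℤ) + k) = (1 - q ^ ((n:ℤ) + k + 1)) * rfac q ((n:ℤ) + k + 1) := by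
    rw [← rfac_rec h0 h1]; ring_nf
  have e2 : rfac q ((n : ℤ) - k) = (1 - q ^ ((n:ℤ) - k + 1)) * rfac q ((n:ℤ) - k + 1) := by
    rw [← rfac_rec h0 h1]; ring_nf
  have e3 : rfac q ((n : ℤ) + (k - 1)) = (1 - q ^ ((n:ℤ) + k)) * rfac q ((n:ℤ) + k) := by
    rw [← rfac_rec h0 h1]; ring_nf
  have e4 : rfac q ((n : ℤ) - (k + 1)) = (1 - q ^ ((n:ℤ) - k)) * rfac q ((n:ℤ) - k) := by
    rw [← rfac_rec h0 h1]; ring_nf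
  have e5 : rfac q (((n + 1 : ℕ) : ℤ) + k) = rfac q ((n:ℤ) + k + 1) := by push_cast; ring_nf
  have e6 : rfac q (((n + 1 : ℕ) : ℤ) - k) = rfac q ((n:ℤ) - k + 1) := by push_cast; ring_nf
  have e7 : rfac q ((n : ℤ) + (k + 1)) = rfac q ((n:ℤ) + k + 1) := by ring_nf
  have e8 : rfac q ((n : ℤ) - (k - 1)) = rfac q ((n:ℤ) - k + 1) := by ring_nf
  have u1 : uu q (k + 1) = - q ^ k * uu q k := uu_succ h0 k
  have u2 : uu q k = - q ^ (k - 1) * uu q (k - 1) := by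
    have := uu_succ h0 (k - 1); simpa using this
  rw [e5, e6, e7, e8, e3, e4, e1, e2, u1, u2, show 2 * (n+1) = 2 * n + 1 + 1 by ring,
    qfac_succ, qfac_succ]
  have hq := h0.ne'
  simp only [zpow_add₀ hq, zpow_sub₀ hq, zpow_natCast, zpow_one]
  have hk : q ^ k ≠ 0 := zpow_ne_zero _ hq
  generalize q ^ k = K at *
  generalize rfac q ((n:ℤ) - k + 1) = R at *
  generalize rfac q ((n:ℤ) + k + 1) = S at *
  generalize uu q (k-1) = U at *
  generalize qfac q (2*n) = F at *
  simp only [pow_add, pow_mul, pow_one]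
  rw [show (q ^ 2) ^ n = (q ^ n) ^ 2 by ring]
  generalize q ^ n = N at *
  field_simp
  ring

lemma finite_jtp {q : ℝ} (h0 : 0 < q) (h1 : q < 1) {x : ℂ} (hx : x ≠ 0) (n : ℕ) :
    HasSum (fun k : ℤ => (acf q n k : ℂ) * x ^ k)
      (∏ j ∈ Finset.range n, ((1 - x * (q : ℂ) ^ j) * (1 - q / x * (q : ℂ) ^ j))) := by
  induction n with
  | zero =>
    have : (fun k : ℤ => (acf q 0 k : ℂ) * x ^ k) = fun k => if k = 0 then 1 else 0 := by
      ext k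
      split_ifs with h
      · subst h; simp [acf, uu, rfac, qfac, tri]
      · rcases lt_or_gt_of_ne h with h | h
        · simp [acf, rfac, h]
        · simp [acf, rfac, h]
    rw [this]
    simpa using hasSum_ite_eq (0:ℤ) (1:ℂ)
  | succ n ih =>
    rw [Finset.prod_range_succ]
    set S := ∏ j ∈ Finset.range n, ((1 - x * (q : ℂ) ^ j) * (1 - q / x * (q : ℂ) ^ j))
    have i1 : HasSum (fun k : ℤ => (acf q n (k - 1) : ℂ) * x ^ (k - 1)) S :=
      ((Equiv.subRight (1:ℤ)).hasSum_iff (f := fun k : ℤ => (acf q n k : ℂ) * x ^ k)).mpr ih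
    have i2 : HasSum (fun k : ℤ => (acf q n (k + 1) : ℂ) * x ^ (k + 1)) S :=
      ((Equiv.addRight (1:ℤ)).hasSum_iff (f := fun k : ℤ => (acf q n k : ℂ) * x ^ k)).mpr ih
    have := ((ih.mul_left (1 + (q:ℂ) ^ (2 * n + 1))).sub (i1.mul_left ((q:ℂ) ^ n * x))).sub
      (i2.mul_left ((q:ℂ) ^ (n+1) / x))
    have e : S * ((1 - x * (q:ℂ) ^ n) * (1 - q / x * (q:ℂ) ^ n)) = (1 + (q:ℂ) ^ (2 * n + 1)) * S
        - (q:ℂ) ^ n * x * S - (q:ℂ) ^ (n + 1) / x * S := by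
      field_simp
      ring
    rw [e]
    refine (congrArg (fun f => HasSum f _) (funext fun k => ?_)).mpr this
    rw [acf_rec h0 h1, zpow_add₀ hx, zpow_sub₀ hx]
    push_cast
    simp only [zpow_one]
    field_simp

lemma rfac_tendsto {q : ℝ} (h0 : 0 < q) (h1 : q < 1) (f : ℕ → ℤ)
    (hf : Filter.Tendsto f Filter.atTop Filter.atTop) :
    Filter.Tendsto (fun n => rfac q (f n)) Filter.atTop (nhds (eulerE q)⁻¹) := by
  have ht : Filter.Tendsto (fun n => (f n).toNat) Filter.atTop Filter.atTop := by
    rw [Filter.tendsto_atTop] at hf ⊢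
    intro b
    filter_upwards [hf b] with n hn
    omega
  have := ((qfac_tendsto h0 h1).comp ht).inv₀ (eulerE_pos h0 h1).ne'
  refine this.congr' ?_
  filter_upwards [hf.eventually_ge_atTop 0] with n hn
  simp [rfac, not_lt.mpr hn]

lemma theta_summable {q : ℝ} (h0 : 0 < q) (h1 : q < 1) {y : ℝ} (hy : 0 < y) :
    Summable (fun k : ℤ => q ^ tri k * y ^ k) := by
  have key : ∀ z : ℝ, 0 < z → Summable (fun k : ℕ => q ^ (tri k) * z ^ k) := by
    intro z hz
    have hpos : ∀ k : ℕ, 0 < q ^ (tri k) * z ^ k := fun k => by positivity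
    apply summable_of_ratio_test_tendsto_lt_one (l := 0) (by norm_num)
      (Filter.Eventually.of_forall fun k => (hpos k).ne')
    have : Filter.Tendsto (fun k : ℕ => z * q ^ k) Filter.atTop (nhds (z * 0)) :=
      (tendsto_pow_atTop_nhds_zero_of_lt_one h0.le h1).const_mul z
    rw [mul_zero] at this
    refine this.congr fun k => ?_
    rw [Real.norm_of_nonneg (hpos _).le, Real.norm_of_nonneg (hpos _).le]
    have : tri ((k+1 : ℕ) : ℤ) = tri k + k := by push_cast; exact tri_succ _
    rw [this, zpow_add₀ h0.ne', zpow_natCast]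
    field_simp
    ring
  apply Summable.of_nat_of_neg
  · simpa using key y hy
  · have := key (q * y⁻¹) (by positivity)
    refine this.congr fun k => ?_
    have e : tri (-(k:ℤ)) = tri k + k := by
      have a := two_tri (-(k:ℤ)); have b := two_tri (k:ℤ); linarith
    rw [e, zpow_add₀ h0.ne', zpow_neg, zpow_natCast, zpow_natCast, mul_pow, inv_pow]
    ring

/-- Jacobi triple product -/
theorem jtp {q : ℝ} (h0 : 0 < q) (h1 : q < 1) {x : ℂ} (hx : x ≠ 0) :
    HasSum (fun k : ℤ => (-1 : ℂ) ^ k * (q : ℂ) ^ tri k * x ^ k) (EE q * TH q x) := by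
  have he := eulerE_pos h0 h1
  have hsum := theta_summable h0 h1 (norm_pos_iff.mpr hx)
  have hS : Summable (fun k : ℤ => (-1 : ℂ) ^ k * (q : ℂ) ^ tri k * x ^ k) := by
    apply Summable.of_norm
    refine hsum.congr fun k => ?_
    simp [abs_of_pos h0]
  have hlim : Filter.Tendsto (fun n : ℕ => ∑' k : ℤ, (acf q n k : ℂ) * x ^ k) Filter.atTop
      (nhds (∑' k : ℤ, ((uu q k * (eulerE q)⁻¹ : ℝ) : ℂ) * x ^ k)) := by
    apply tendsto_tsum_of_dominated_convergence
      (bound := fun k => ((eulerE q)⁻¹ * (eulerE q)⁻¹) * (q ^ tri k * ‖x‖ ^ k)) (hsum.mul_left _)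
    · intro k
      apply Filter.Tendsto.mul_const
      apply (Complex.continuous_ofReal.tendsto _).comp
      unfold acf
      apply Filter.Tendsto.const_mul
      have t1 : Filter.Tendsto (fun n : ℕ => qfac q (2 * n)) Filter.atTop (nhds (eulerE q)) :=
        (qfac_tendsto h0 h1).comp (Filter.tendsto_id.const_mul_atTop' (by norm_num))
      have t2 := rfac_tendsto h0 h1 (fun n : ℕ => (n:ℤ) + k)
        (Filter.tendsto_atTop_add_const_right _ _ tendsto_natCast_atTop_atTop)
      have t3 := rfac_tendsto h0 h1 (fun n : ℕ => (n:ℤ) - k)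
        (Filter.tendsto_atTop_add_const_right _ _ tendsto_natCast_atTop_atTop)
      have := (t1.mul t2).mul t3
      rwa [mul_inv_cancel₀ he.ne', one_mul] at this
    · refine Filter.Eventually.of_forall fun n k => ?_
      rw [norm_mul, Complex.norm_real, norm_zpow]
      have hb : ‖acf q n k‖ ≤ q ^ tri k * ((eulerE q)⁻¹ * (eulerE q)⁻¹) := by
        unfold acf uu
        rw [norm_mul, norm_mul, norm_mul, norm_mul]
        have a1 := rfac_nonneg h0 h1 (n + k)
        have a2 := rfac_nonneg h0 h1 (n - k)
        have a3 := (qfac_pos h0 h1 (2 * n)).le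
        rw [Real.norm_of_nonneg a1, Real.norm_of_nonneg a2, Real.norm_of_nonneg a3,
          Real.norm_of_nonneg (by positivity : 0 ≤ q ^ tri k)]
        simp only [norm_zpow, norm_neg, norm_one, one_zpow, one_mul]
        have b1 := rfac_le h0 h1 (n + k)
        have b2 := rfac_le h0 h1 (n - k)
        have b3 := qfac_le h0 h1 (2 * n)
        gcongr
        calc qfac q (2 * n) * rfac q (n + k) ≤ 1 * (eulerE q)⁻¹ := by gcongr
          _ = _ := one_mul _
      calc ‖acf q n k‖ * ‖x‖ ^ k ≤ q ^ tri k * ((eulerE q)⁻¹ * (eulerE q)⁻¹) * ‖x‖ ^ k := by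
            gcongr
        _ = _ := by ring
  have hprod : Filter.Tendsto (fun n : ℕ => ∑' k : ℤ, (acf q n k : ℂ) * x ^ k) Filter.atTop
      (nhds (TH q x)) := by
    have := (PP_mult h0 h1 x).hasProd.tendsto_prod_nat.mul
      (PP_mult h0 h1 (q / x)).hasProd.tendsto_prod_nat
    refine this.congr fun n => ?_
    rw [(finite_jtp h0 h1 hx n).tsum_eq, Finset.prod_mul_distrib]
  have heq := tendsto_nhds_unique hprod hlim
  have h2 : ∑' k : ℤ, ((uu q k * (eulerE q)⁻¹ : ℝ) : ℂ) * x ^ k =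
      (eulerE q : ℂ)⁻¹ * ∑' k : ℤ, (-1 : ℂ) ^ k * (q : ℂ) ^ tri k * x ^ k := by
    rw [← tsum_mul_left]
    refine tsum_congr fun k => ?_
    simp only [uu]; push_cast; ring
  rw [heq, h2, EE_eq h0 h1, mul_inv_cancel_left₀ (by exact_mod_cast he.ne')]
  exact hS.hasSum


lemma TH_symm {q : ℝ} (h0 : 0 < q) (x : ℂ) : TH q (q / x) = TH q x := by
  have : (q : ℂ) ≠ 0 := by exact_mod_cast h0.ne'
  unfold TH
  rw [div_div_cancel₀ this, mul_comm]

lemma jtp' {q : ℝ} (h0 : 0 < q) (h1 : q < 1) (N : ℕ) (hN : 0 < N) (c : ℤ) {z : ℂ} (hz : z ≠ 0) :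
    HasSum (fun k : ℤ => (q : ℂ) ^ (N * tri k + c * k) * z ^ k)
      (EE (q ^ N) * TH (q ^ N) (-((q : ℂ) ^ c * z))) := by
  have hq : (q : ℂ) ≠ 0 := by exact_mod_cast h0.ne'
  have := jtp (q := q ^ N) (by positivity) (pow_lt_one₀ h0.le h1 hN.ne')
    (x := -((q : ℂ) ^ c * z)) (neg_ne_zero.mpr (mul_ne_zero (zpow_ne_zero _ hq) hz))
  refine (congrArg (fun f => HasSum f _) (funext fun k => ?_)).mpr this
  have e : (-1 : ℂ) ^ k * (-((q : ℂ) ^ c * z)) ^ k = ((q : ℂ) ^ c * z) ^ k := by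
    rw [← mul_zpow]; ring_nf
  rw [mul_right_comm, e, mul_zpow, ← zpow_mul, zpow_add₀ hq, zpow_mul]
  push_cast
  rw [zpow_natCast]
  ring

lemma tsum_pieces {ι : Type} [Fintype ι] (e : ι → ℤ × ℤ → ℤ × ℤ)
    (he : Function.Bijective (fun p : ι × (ℤ × ℤ) => e p.1 p.2)) {F : ℤ × ℤ → ℂ} (hF : Summable F) :
    ∑' p, F p = ∑ i, ∑' w, F (e i w) := by
  let E := Equiv.ofBijective _ he
  have h1 : Summable (fun p : ι × (ℤ × ℤ) => F (E p)) := E.summable_iff.mpr hF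
  rw [← E.tsum_eq F, h1.tsum_prod, tsum_fintype]
  rfl

lemma tsum_mul_pair {f g : ℤ → ℂ} {a b : ℂ} (hf : HasSum f a) (hg : HasSum g b) :
    HasSum (fun p : ℤ × ℤ => f p.1 * g p.2) (a * b) :=
  hf.mul hg (summable_mul_of_summable_norm hf.summable.norm hg.summable.norm)

noncomputable def BB (q : ℝ) (x : ℂ) : ℂ := EE (q ^ 2) * TH (q ^ 2) (-((q : ℂ) ^ (1:ℤ) * x ^ 2))
noncomputable def DD (q : ℝ) (x : ℂ) : ℂ := x * (EE (q ^ 2) * TH (q ^ 2) (-((q : ℂ) ^ (2:ℤ) * x ^ 2)))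

def e2 : Bool → ℤ × ℤ → ℤ × ℤ
  | false, w => (w.1 + 1 + w.2, w.1 + 1 - w.2)
  | true, w => (w.1 + w.2 + 1, w.1 - w.2)

lemma e2_bij : Function.Bijective (fun p : Bool × (ℤ × ℤ) => e2 p.1 p.2) := by
  constructor
  · rintro ⟨i, a, b⟩ ⟨j, c, d⟩ h
    cases i <;> cases j <;> simp only [e2, Prod.mk.injEq] at h ⊢ <;> simp <;> omega
  · rintro ⟨m, n⟩
    rcases Int.even_or_odd (m - n) with ⟨b, hb⟩ | ⟨b, hb⟩
    · exact ⟨(false, (n + b - 1, b)), by simp [e2]; omega⟩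
    · exact ⟨(true, (n + b, b)), by simp [e2]; omega⟩

theorem det_id {q : ℝ} (h0 : 0 < q) (h1 : q < 1) {x y : ℂ} (hx : x ≠ 0) (hy : y ≠ 0) :
    EE q ^ 2 * TH q (x * y) * TH q (x / y) = x * (DD q x * BB q y - BB q x * DD q y) := by
  have hq : (q : ℂ) ≠ 0 := by exact_mod_cast h0.ne'
  have s1 := jtp' h0 h1 1 one_pos 0 (z := -(x * y)) (neg_ne_zero.mpr (mul_ne_zero hx hy))
  have s2 := jtp' h0 h1 1 one_pos 0 (z := -(x / y)) (neg_ne_zero.mpr (div_ne_zero hx hy))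
  have hs := tsum_mul_pair s1 s2
  have hb := fun {z : ℂ} (hz : z ≠ 0) => jtp' h0 h1 2 two_pos 1 (z := z ^ 2) (pow_ne_zero 2 hz)
  have hd := fun {z : ℂ} (hz : z ≠ 0) => jtp' h0 h1 2 two_pos 2 (z := z ^ 2) (pow_ne_zero 2 hz)
  have p1 := (tsum_mul_pair (hd hx) (hb hy)).mul_left (x ^ 2)
  have p2 := (tsum_mul_pair (hb hx) (hd hy)).mul_left (-(x * y))
  have := hs.tsum_eq
  rw [tsum_pieces e2 e2_bij hs.summable] at this
  simp only [Fintype.sum_bool] at this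
  have t1 : ∀ w : ℤ × ℤ, (q:ℂ) ^ (((1:ℕ):ℤ) * tri (e2 false w).1 + 0 * (e2 false w).1) * (-(x * y)) ^ (e2 false w).1 *
      ((q:ℂ) ^ (((1:ℕ):ℤ) * tri (e2 false w).2 + 0 * (e2 false w).2) * (-(x / y)) ^ (e2 false w).2) =
      x ^ 2 * ((q:ℂ) ^ (((2:ℕ):ℤ) * tri w.1 + 2 * w.1) * (x ^ 2) ^ w.1 *
      ((q:ℂ) ^ (((2:ℕ):ℤ) * tri w.2 + 1 * w.2) * (y ^ 2) ^ w.2)) := by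
    rintro ⟨a, b⟩
    simp only [e2]
    have ex : ((1:ℕ):ℤ) * tri (a + 1 + b) + 0 * (a + 1 + b) + (((1:ℕ):ℤ) * tri (a + 1 - b) + 0 * (a + 1 - b))
        = ((2:ℕ):ℤ) * tri a + 2 * a + (((2:ℕ):ℤ) * tri b + 1 * b) := by
      have i1 := two_tri (a + 1 + b); have i2 := two_tri (a + 1 - b)
      have i3 := two_tri a; have i4 := two_tri b
      push_cast
      linarith
    have ey : (-(x * y)) ^ (a + 1 + b) * (-(x / y)) ^ (a + 1 - b) = x ^ 2 * (x ^ 2) ^ a * (y ^ 2) ^ b := by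
      have n1 : -(x * y) ≠ 0 := neg_ne_zero.mpr (mul_ne_zero hx hy)
      have n2 : -(x / y) ≠ 0 := neg_ne_zero.mpr (div_ne_zero hx hy)
      rw [zpow_add₀ n1, zpow_sub₀ n2, show ∀ A B C D : ℂ, A * B * (C / D) = (A * C) * (B / D) by
        intros; ring, ← mul_zpow, ← div_zpow]
      have v1 : -(x * y) * -(x / y) = x ^ 2 := by field_simp
      have v2 : -(x * y) / -(x / y) = y ^ 2 := by field_simp
      rw [v1, v2, zpow_add₀ (pow_ne_zero 2 hx), zpow_one]; ring
    rw [mul_mul_mul_comm, ← zpow_add₀ hq, ex, ey, zpow_add₀ hq]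
    ring
  have t2 : ∀ w : ℤ × ℤ, (q:ℂ) ^ (((1:ℕ):ℤ) * tri (e2 true w).1 + 0 * (e2 true w).1) * (-(x * y)) ^ (e2 true w).1 *
      ((q:ℂ) ^ (((1:ℕ):ℤ) * tri (e2 true w).2 + 0 * (e2 true w).2) * (-(x / y)) ^ (e2 true w).2) =
      -(x * y) * ((q:ℂ) ^ (((2:ℕ):ℤ) * tri w.1 + 1 * w.1) * (x ^ 2) ^ w.1 *
      ((q:ℂ) ^ (((2:ℕ):ℤ) * tri w.2 + 2 * w.2) * (y ^ 2) ^ w.2)) := by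
    rintro ⟨a, b⟩
    simp only [e2]
    have ex : ((1:ℕ):ℤ) * tri (a + b + 1) + 0 * (a + b + 1) + (((1:ℕ):ℤ) * tri (a - b) + 0 * (a - b))
        = ((2:ℕ):ℤ) * tri a + 1 * a + (((2:ℕ):ℤ) * tri b + 2 * b) := by
      have i1 := two_tri (a + b + 1); have i2 := two_tri (a - b)
      have i3 := two_tri a; have i4 := two_tri b
      push_cast
      linarith
    have ey : (-(x * y)) ^ (a + b + 1) * (-(x / y)) ^ (a - b) = -(x * y) * (x ^ 2) ^ a * (y ^ 2) ^ b := by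
      have n1 : -(x * y) ≠ 0 := neg_ne_zero.mpr (mul_ne_zero hx hy)
      have n2 : -(x / y) ≠ 0 := neg_ne_zero.mpr (div_ne_zero hx hy)
      rw [zpow_add₀ n1, zpow_add₀ n1, zpow_sub₀ n2, zpow_one,
        show ∀ A B E C D : ℂ, A * B * E * (C / D) = E * (A * C) * (B / D) by
        intros; ring, ← mul_zpow, ← div_zpow]
      have v1 : -(x * y) * -(x / y) = x ^ 2 := by field_simp
      have v2 : -(x * y) / -(x / y) = y ^ 2 := by field_simp
      rw [v1, v2]
    rw [mul_mul_mul_comm, ← zpow_add₀ hq, ex, ey, zpow_add₀ hq]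
    ring
  rw [tsum_congr t1, tsum_congr t2, p1.tsum_eq, p2.tsum_eq] at this
  simp only [pow_one, zpow_zero, one_mul, neg_neg] at this
  unfold BB DD
  linear_combination -this

def e5 (o : Fin 5 → ℤ × ℤ) (i : Fin 5) (w : ℤ × ℤ) : ℤ × ℤ :=
  (2 * w.1 - w.2 + (o i).1, w.1 + 2 * w.2 + (o i).2)

def oC : Fin 5 → ℤ × ℤ := ![(0,0), (1,0), (-1,0), (0,1), (0,-1)]
def oD : Fin 5 → ℤ × ℤ := ![(0,1), (-1,0), (0,-1), (-1,-1), (0,0)]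

lemma e5_bij (o : Fin 5 → ℤ × ℤ) (ho : o = oC ∨ o = oD) :
    Function.Bijective (fun p : Fin 5 × (ℤ × ℤ) => e5 o p.1 p.2) := by
  constructor
  · rintro ⟨i, a, b⟩ ⟨j, c, d⟩ h
    rcases ho with rfl | rfl <;> fin_cases i <;> fin_cases j <;>
      simp [e5, oC, oD, Prod.mk.injEq] at h ⊢ <;> omega
  · rintro ⟨m, n⟩
    have key : ∃ i : Fin 5, ((m - (o i).1) - 2 * (n - (o i).2)) % 5 = 0 := by
      have : (m - 2 * n) % 5 = 0 ∨ (m - 2 * n) % 5 = 1 ∨ (m - 2 * n) % 5 = 2 ∨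
        (m - 2 * n) % 5 = 3 ∨ (m - 2 * n) % 5 = 4 := by omega
      rcases ho with rfl | rfl <;> simp [Fin.exists_fin_succ, oC, oD] <;> omega
    obtain ⟨i, hi⟩ := key
    refine ⟨(i, ((2 * (m - (o i).1) + (n - (o i).2)) / 5, (2 * (n - (o i).2) - (m - (o i).1)) / 5)), ?_⟩
    simp only [e5, Prod.mk.injEq]
    generalize (o i).1 = s at *
    generalize (o i).2 = t at *
    constructor <;> omega

/-- φ(-q)² - φ(-q⁵)² = -4 q f(-q,-q⁹) f(-q³,-q⁷) -/
theorem phi_id {q : ℝ} (h0 : 0 < q) (h1 : q < 1) :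
    (EE (q ^ 2) * TH (q ^ 2) q) ^ 2 = (EE (q ^ 10) * TH (q ^ 10) ((q:ℂ) ^ 5)) ^ 2
      - 4 * q * (EE (q ^ 10) * TH (q ^ 10) q) * (EE (q ^ 10) * TH (q ^ 10) ((q:ℂ) ^ 3)) := by
  have hq : (q : ℂ) ≠ 0 := by exact_mod_cast h0.ne'
  have hm : (-1 : ℂ) ≠ 0 := by norm_num
  have s1 := jtp' h0 h1 2 two_pos 1 hm
  have hs := tsum_mul_pair s1 s1
  have hc := fun (c d : ℤ) => tsum_mul_pair (jtp' h0 h1 10 (by norm_num) c hm)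
    (jtp' h0 h1 10 (by norm_num) d hm)
  have y9 : TH (q ^ 10) ((q:ℂ) ^ 9) = TH (q ^ 10) q := by
    rw [← TH_symm (by positivity)]; congr 1; push_cast; field_simp
  have y7 : TH (q ^ 10) ((q:ℂ) ^ 7) = TH (q ^ 10) ((q:ℂ)^3) := by
    rw [← TH_symm (by positivity)]; congr 1; push_cast; field_simp
  have key : ∀ (i : Fin 5) (r c d : ℤ) (w : ℤ × ℤ),
      r + 5 * (w.1 ^ 2 - w.1) + c * w.1 + 5 * (w.2 ^ 2 - w.2) + d * w.2 =
        (2 * w.1 - w.2 + (oC i).1) ^ 2 + (w.1 + 2 * w.2 + (oC i).2) ^ 2 →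
      (q:ℂ) ^ (((2:ℕ):ℤ) * tri (e5 oC i w).1 + 1 * (e5 oC i w).1) * (-1) ^ (e5 oC i w).1 *
      ((q:ℂ) ^ (((2:ℕ):ℤ) * tri (e5 oC i w).2 + 1 * (e5 oC i w).2) * (-1) ^ (e5 oC i w).2) =
      ((q:ℂ) ^ r * (-1) ^ ((oC i).1 + (oC i).2)) *
      ((q:ℂ) ^ (((10:ℕ):ℤ) * tri w.1 + c * w.1) * (-1) ^ w.1 *
      ((q:ℂ) ^ (((10:ℕ):ℤ) * tri w.2 + d * w.2) * (-1) ^ w.2)) := by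
    rintro i r c d ⟨a, b⟩ h
    simp only [e5] at h ⊢
    have ex : ((2:ℕ):ℤ) * tri (2 * a - b + (oC i).1) + 1 * (2 * a - b + (oC i).1) +
       (((2:ℕ):ℤ) * tri (a + 2 * b + (oC i).2) + 1 * (a + 2 * b + (oC i).2)) =
       r + (((10:ℕ):ℤ) * tri a + c * a) + (((10:ℕ):ℤ) * tri b + d * b) := by
      have i1 := two_tri (2 * a - b + (oC i).1); have i2 := two_tri (a + 2 * b + (oC i).2)
      have i3 := two_tri a; have i4 := two_tri b
      push_cast
      linarith
    have ey : (-1 : ℂ) ^ (2 * a - b + (oC i).1) * (-1) ^ (a + 2 * b + (oC i).2) =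
        (-1) ^ ((oC i).1 + (oC i).2) * ((-1) ^ a * (-1) ^ b) := by
      rw [← zpow_add₀ hm, ← zpow_add₀ hm, ← zpow_add₀ hm,
        show 2 * a - b + (oC i).1 + (a + 2 * b + (oC i).2) =
          ((oC i).1 + (oC i).2 + (a + b)) + 2 * a by ring, zpow_add₀ hm _ (2 * a), zpow_mul]
      norm_num
    rw [mul_mul_mul_comm, ← zpow_add₀ hq, ex, ey, zpow_add₀ hq, zpow_add₀ hq]
    ring
  have := hs.tsum_eq
  rw [tsum_pieces (e5 oC) (e5_bij oC (Or.inl rfl)) hs.summable] at this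
  simp only [Fin.sum_univ_five] at this
  rw [tsum_congr fun w => key 0 0 5 5 w (by simp [oC]; ring),
    tsum_congr fun w => key 1 1 9 3 w (by simp [oC]; ring),
    tsum_congr fun w => key 2 1 1 7 w (by simp [oC]; ring),
    tsum_congr fun w => key 3 1 7 9 w (by simp [oC]; ring),
    tsum_congr fun w => key 4 1 3 1 w (by simp [oC]; ring),
    ((hc 5 5).mul_left _).tsum_eq, ((hc 9 3).mul_left _).tsum_eq, ((hc 1 7).mul_left _).tsum_eq,
    ((hc 7 9).mul_left _).tsum_eq, ((hc 3 1).mul_left _).tsum_eq] at this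
  have z9 : (q:ℂ) ^ (9:ℤ) = (q:ℂ) ^ 9 := by norm_cast
  have z7 : (q:ℂ) ^ (7:ℤ) = (q:ℂ) ^ 7 := by norm_cast
  have z5 : (q:ℂ) ^ (5:ℤ) = (q:ℂ) ^ 5 := by norm_cast
  have z3 : (q:ℂ) ^ (3:ℤ) = (q:ℂ) ^ 3 := by norm_cast
  simp [oC, z9, z7, z5, z3, y9, y7] at this
  linear_combination -this

/-- ψ(q)² - q ψ(q⁵)² = f(q,q⁴) f(q²,q³) -/
theorem psi_id {q : ℝ} (h0 : 0 < q) (h1 : q < 1) :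
    (EE q * TH q (-q)) ^ 2 = q * (EE (q ^ 5) * TH (q ^ 5) (-(q:ℂ) ^ 5)) ^ 2
      + 4 * (EE (q ^ 5) * TH (q ^ 5) (-q)) * (EE (q ^ 5) * TH (q ^ 5) (-(q:ℂ) ^ 2)) := by
  have hq : (q : ℂ) ≠ 0 := by exact_mod_cast h0.ne'
  have hm : (1 : ℂ) ≠ 0 := by norm_num
  have s1 := jtp' h0 h1 1 one_pos 1 hm
  have hs := tsum_mul_pair s1 s1
  have hc := fun (c d : ℤ) => tsum_mul_pair (jtp' h0 h1 5 (by norm_num) c hm)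
    (jtp' h0 h1 5 (by norm_num) d hm)
  have y4 : TH (q ^ 5) (-(q:ℂ) ^ 4) = TH (q ^ 5) (-q) := by
    rw [← TH_symm (by positivity)]; congr 1; push_cast; field_simp
  have y3 : TH (q ^ 5) (-(q:ℂ) ^ 3) = TH (q ^ 5) (-(q:ℂ)^2) := by
    rw [← TH_symm (by positivity)]; congr 1; push_cast; field_simp
  have key : ∀ (i : Fin 5) (r c d : ℤ) (w : ℤ × ℤ),
      2 * r + 5 * (w.1 ^ 2 - w.1) + 2 * c * w.1 + 5 * (w.2 ^ 2 - w.2) + 2 * d * w.2 =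
        (2 * w.1 - w.2 + (oD i).1) ^ 2 + (w.1 + 2 * w.2 + (oD i).2) ^ 2
        + (2 * w.1 - w.2 + (oD i).1) + (w.1 + 2 * w.2 + (oD i).2) →
      (q:ℂ) ^ (((1:ℕ):ℤ) * tri (e5 oD i w).1 + 1 * (e5 oD i w).1) * (1) ^ (e5 oD i w).1 *
      ((q:ℂ) ^ (((1:ℕ):ℤ) * tri (e5 oD i w).2 + 1 * (e5 oD i w).2) * (1) ^ (e5 oD i w).2) =
      (q:ℂ) ^ r *
      ((q:ℂ) ^ (((5:ℕ):ℤ) * tri w.1 + c * w.1) * (1) ^ w.1 *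
      ((q:ℂ) ^ (((5:ℕ):ℤ) * tri w.2 + d * w.2) * (1) ^ w.2)) := by
    rintro i r c d ⟨a, b⟩ h
    simp only [e5] at h ⊢
    have ex : ((1:ℕ):ℤ) * tri (2 * a - b + (oD i).1) + 1 * (2 * a - b + (oD i).1) +
       (((1:ℕ):ℤ) * tri (a + 2 * b + (oD i).2) + 1 * (a + 2 * b + (oD i).2)) =
       r + (((5:ℕ):ℤ) * tri a + c * a) + (((5:ℕ):ℤ) * tri b + d * b) := by
      have i1 := two_tri (2 * a - b + (oD i).1); have i2 := two_tri (a + 2 * b + (oD i).2)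
      have i3 := two_tri a; have i4 := two_tri b
      push_cast
      linarith
    simp only [one_zpow, mul_one]
    rw [← zpow_add₀ hq, ex, zpow_add₀ hq, zpow_add₀ hq]
    ring
  have := hs.tsum_eq
  rw [tsum_pieces (e5 oD) (e5_bij oD (Or.inr rfl)) hs.summable] at this
  simp only [Fin.sum_univ_five] at this
  rw [tsum_congr fun w => key 0 1 5 5 w (by simp [oD]; ring),
    tsum_congr fun w => key 1 0 2 4 w (by simp [oD]; ring),
    tsum_congr fun w => key 2 0 3 1 w (by simp [oD]; ring),
    tsum_congr fun w => key 3 0 1 2 w (by simp [oD]; ring),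
    tsum_congr fun w => key 4 0 4 3 w (by simp [oD]; ring),
    ((hc 5 5).mul_left _).tsum_eq, ((hc 2 4).mul_left _).tsum_eq, ((hc 3 1).mul_left _).tsum_eq,
    ((hc 1 2).mul_left _).tsum_eq, ((hc 4 3).mul_left _).tsum_eq] at this
  have z5 : (q:ℂ) ^ (5:ℤ) = (q:ℂ) ^ 5 := by norm_cast
  have z4 : (q:ℂ) ^ (4:ℤ) = (q:ℂ) ^ 4 := by norm_cast
  have z3 : (q:ℂ) ^ (3:ℤ) = (q:ℂ) ^ 3 := by norm_cast
  have z2 : (q:ℂ) ^ (2:ℤ) = (q:ℂ) ^ 2 := by norm_cast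
  simp [z4, z5, z2, z3, y4, y3] at this
  linear_combination -this


noncomputable def SS (q : ℝ) (x : ℂ) : ℂ := ∑' n : ℕ, x ^ (n + 1) / (1 - (q:ℂ) ^ (n + 1))
noncomputable def VV (q : ℝ) (x : ℂ) : ℂ :=
  ∑' n : ℕ, ((n : ℂ) + 1) * x ^ (n + 1) / (1 - (q:ℂ) ^ (n + 1))

lemma den_ge {q : ℝ} (h0 : 0 < q) (h1 : q < 1) (n : ℕ) : 1 - q ≤ ‖1 - (q:ℂ) ^ (n + 1)‖ := by
  have e : (1 - (q:ℂ) ^ (n + 1)) = ((1 - q ^ (n + 1) : ℝ) : ℂ) := by push_cast; ring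
  have : q ^ (n + 1) ≤ q := by simpa using pow_le_pow_of_le_one h0.le h1.le (Nat.le_add_left 1 n)
  rw [e, Complex.norm_real, Real.norm_eq_abs, abs_of_nonneg] <;> linarith

lemma den_ne {q : ℝ} (h0 : 0 < q) (h1 : q < 1) (n : ℕ) : 1 - (q:ℂ) ^ (n + 1) ≠ 0 := by
  intro h
  have := den_ge h0 h1 n
  rw [h] at this; simp at this; linarith

lemma VV_summable' {q : ℝ} (h0 : 0 < q) (h1 : q < 1) {r : ℝ} (hr0 : 0 ≤ r) (hr : r < 1) :
    Summable (fun n : ℕ => ((n:ℝ) + 1) * r ^ n / (1 - q)) := by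
  have h2 : Summable (fun n : ℕ => ((n:ℝ)) * r ^ n) := by
    simpa using summable_pow_mul_geometric_of_norm_lt_one 1 (r := r) (by rwa [Real.norm_of_nonneg hr0])
  have h3 := summable_geometric_of_lt_one hr0 hr
  refine ((h2.add h3).div_const (1 - q)).congr fun n => by ring

lemma SS_deriv {q : ℝ} (h0 : 0 < q) (h1 : q < 1) {x : ℂ} (hx : ‖x‖ < 1) :
    HasDerivAt (SS q) (∑' n : ℕ, ((n : ℂ) + 1) * x ^ n / (1 - (q:ℂ) ^ (n + 1))) x := by
  obtain ⟨r, hr, hr1⟩ := exists_between hx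
  have hr0 : 0 < r := lt_of_le_of_lt (norm_nonneg _) hr
  refine hasDerivAt_tsum_of_isPreconnected (g := fun (n:ℕ) (z:ℂ) => z^(n+1)/(1-(q:ℂ)^(n+1)))
    (g' := fun (n:ℕ) (z:ℂ) => ((n:ℂ)+1)*z^n/(1-(q:ℂ)^(n+1))) (u := fun n : ℕ => ((n:ℝ) + 1) * r ^ n / (1 - q))
    (t := Metric.ball (0:ℂ) r) (y₀ := 0) (VV_summable' h0 h1 hr0.le hr1) Metric.isOpen_ball
    (convex_ball _ _).isPreconnected ?_ ?_ (by simpa using hr0) ?_ (by simpa using hr)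
  · intro n y hy
    have := (hasDerivAt_pow (n+1) y).div_const (1 - (q:ℂ) ^ (n + 1))
    simpa using this
  · intro n y hy
    rw [norm_div, norm_mul, norm_pow]
    have hy' : ‖y‖ ≤ r := by simpa using (mem_ball_zero_iff.mp hy).le
    have hn : ‖(n:ℂ) + 1‖ = (n:ℝ) + 1 := by
      have : ((n:ℂ) + 1) = ((n + 1 : ℕ) : ℂ) := by push_cast; rfl
      rw [this, Complex.norm_natCast]; push_cast; rfl
    rw [hn]
    have := den_ge h0 h1 n
    have : 0 < 1 - q := by linarith
    gcongr
  · simpa using summable_zero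

lemma VV_eq {q : ℝ} (x : ℂ) :
    VV q x = x * ∑' n : ℕ, ((n : ℂ) + 1) * x ^ n / (1 - (q:ℂ) ^ (n + 1)) := by
  rw [VV, ← tsum_mul_left]
  exact tsum_congr fun n => by ring

lemma SS_summable {q : ℝ} (h0 : 0 < q) (h1 : q < 1) {x : ℂ} (hx : ‖x‖ < 1) :
    Summable (fun n : ℕ => x ^ (n + 1) / (1 - (q:ℂ) ^ (n + 1))) := by
  refine Summable.of_norm_bounded (g := fun n : ℕ => ‖x‖ ^ n * (1 / (1 - q)))
    ((summable_geometric_of_lt_one (norm_nonneg x) hx).mul_right _) fun n => ?_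
  rw [norm_div, norm_pow]
  have := den_ge h0 h1 n
  have h2 : 0 < 1 - q := by linarith
  rw [mul_one_div]
  exact div_le_div₀ (by positivity)
    (pow_le_pow_of_le_one (norm_nonneg _) hx.le (Nat.le_succ n)) h2 this

lemma norm_mul_q_lt {q : ℝ} (h0 : 0 < q) (h1 : q < 1) {x : ℂ} (hx : ‖x‖ < 1) : ‖x * (q:ℂ)‖ < 1 := by
  rw [norm_mul, Complex.norm_real, Real.norm_of_nonneg h0.le]
  nlinarith [norm_nonneg x]

lemma SS_shift {q : ℝ} (h0 : 0 < q) (h1 : q < 1) {x : ℂ} (hx : ‖x‖ < 1) :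
    SS q x = x / (1 - x) + SS q (x * q) := by
  have a := SS_summable h0 h1 hx
  have b := SS_summable h0 h1 (norm_mul_q_lt h0 h1 hx)
  have : SS q x - SS q (x * q) = x / (1 - x) := by
    unfold SS
    rw [← a.tsum_sub b]
    have : ∀ n : ℕ, x ^ (n + 1) / (1 - (q:ℂ) ^ (n + 1)) - (x * q) ^ (n + 1) / (1 - (q:ℂ) ^ (n + 1))
        = x * x ^ n := by
      intro n
      have := den_ne h0 h1 n
      rw [mul_pow]
      field_simp
      ring
    rw [tsum_congr this, tsum_mul_left, tsum_geometric_of_norm_lt_one hx, div_eq_mul_inv]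
  linear_combination this

lemma PP_logderiv {q : ℝ} (h0 : 0 < q) (h1 : q < 1) {x : ℂ} (hx : ‖x‖ < 1) :
    x * deriv (PP q) x = - SS q x * PP q x := by
  let M : ℂ → ℂ := fun x => x * deriv (PP q) x / PP q x + SS q x
  have hd := PP_diff h0 h1
  have hstep : ∀ x : ℂ, ‖x‖ < 1 → M x = M (x * q) := by
    intro x hx
    have hx1 : 1 - x ≠ 0 := by
      intro h
      have : x = 1 := by linear_combination -h
      rw [this] at hx; simp at hx
    have hp := PP_ne_zero_of_norm h0 h1 _ (norm_mul_q_lt h0 h1 hx)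
    have e : deriv (PP q) x = - PP q (x * q) + (1 - x) * (q * deriv (PP q) (x * q)) := by
      have i1 : HasDerivAt (fun x : ℂ => x * (q:ℂ)) (q:ℂ) x := by
        simpa using (hasDerivAt_id x).mul_const (q:ℂ)
      have i2 := (hd (x * q)).hasDerivAt.comp x i1
      have i3 := ((hasDerivAt_id x).const_sub 1).mul i2
      have i4 : PP q = (fun x => 1 - id x) * (PP q ∘ fun x : ℂ => x * (q:ℂ)) := by
        ext z; simpa using PP_succ h0 h1 z
      rw [← i4] at i3
      rw [i3.deriv]
      simp only [Function.comp, id]; ring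
    simp only [M]
    rw [SS_shift h0 h1 hx, e, PP_succ h0 h1 x]
    field_simp
    ring
  have hM0 : M 0 = 0 := by simp [M, SS]
  have hcont : ContinuousAt M 0 := by
    have c1 : Continuous (deriv (PP q)) := (hd.contDiff (n := 1)).continuous_deriv (le_refl _)
    have c2 : ContinuousAt (SS q) 0 := (SS_deriv h0 h1 (by simp)).continuousAt
    have c3 : PP q 0 ≠ 0 := PP_ne_zero_of_norm h0 h1 _ (by simp)
    exact ((continuousAt_id.mul c1.continuousAt).div hd.continuous.continuousAt c3).add c2
  have hn : ∀ n : ℕ, M x = M (x * (q:ℂ) ^ n) := by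
    intro n
    induction n with
    | zero => simp
    | succ n ih =>
      rw [ih, hstep, mul_assoc, ← pow_succ]
      rw [norm_mul, norm_pow, Complex.norm_real, Real.norm_of_nonneg h0.le]
      have : q ^ n ≤ 1 := pow_le_one₀ h0.le h1.le
      have : 0 < q ^ n := by positivity
      nlinarith [norm_nonneg x]
  have ht : Filter.Tendsto (fun n : ℕ => x * (q:ℂ) ^ n) Filter.atTop (nhds 0) := by
    have : ‖(q:ℂ)‖ < 1 := by rwa [Complex.norm_real, Real.norm_of_nonneg h0.le]
    simpa using (tendsto_pow_atTop_nhds_zero_of_norm_lt_one this).const_mul x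
  have hlim := hcont.tendsto.comp ht
  rw [hM0] at hlim
  have : M x = 0 := by
    refine tendsto_nhds_unique (tendsto_const_nhds.congr fun n => ?_) hlim
    exact hn n
  have hp := PP_ne_zero_of_norm h0 h1 _ hx
  simp only [M] at this
  field_simp at this
  linear_combination this

noncomputable def LL (q : ℝ) (z : ℂ) : ℂ := - (z / (1 - z)) - SS q (z * q) + SS q (q / z)
noncomputable def PI (q : ℝ) (z : ℂ) : ℂ := - (z / (1 - z) ^ 2) - VV q (z * q) - VV q (q / z)

def annul (q : ℝ) : Set ℂ := {z | ‖z * (q:ℂ)‖ < 1 ∧ ‖(q:ℂ) / z‖ < 1 ∧ z ≠ 0 ∧ z ≠ 1}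

lemma TH_deriv {q : ℝ} (h0 : 0 < q) (h1 : q < 1) {z : ℂ} (hz : z ∈ annul q) :
    HasDerivAt (TH q) (LL q z * TH q z / z) z := by
  obtain ⟨ha, hb, hz0, hz1⟩ := hz
  have hd := PP_diff h0 h1
  have hq : (q : ℂ) ≠ 0 := by exact_mod_cast h0.ne'
  have i1 : HasDerivAt (fun x : ℂ => x * (q:ℂ)) (q:ℂ) z := by
    simpa using (hasDerivAt_id z).mul_const (q:ℂ)
  have i2 : HasDerivAt (fun x : ℂ => (q:ℂ) / x) (-(q:ℂ) / z ^ 2) z := by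
    have := (hasDerivAt_inv hz0).const_mul (q:ℂ)
    simpa [div_eq_mul_inv] using this
  have j1 := (hd (z * q)).hasDerivAt.comp z i1
  have j2 := (hd (q / z)).hasDerivAt.comp z i2
  have j3 := (((hasDerivAt_id z).const_sub 1).mul j1).mul j2
  have e : TH q = ((fun x => 1 - id x) * (PP q ∘ fun x : ℂ => x * (q:ℂ))) *
      (PP q ∘ fun x : ℂ => (q:ℂ) / x) := by
    ext w
    simp only [TH, Pi.mul_apply, Function.comp, id]
    rw [← PP_succ h0 h1]
  rw [← e] at j3
  refine j3.congr_deriv ?_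
  have k1 := PP_logderiv h0 h1 ha
  have k2 := PP_logderiv h0 h1 hb
  have hz1' : 1 - z ≠ 0 := sub_ne_zero.mpr (Ne.symm hz1)
  simp only [TH, LL, Pi.mul_apply, Function.comp, id]
  rw [PP_succ h0 h1 z]
  have k1' : deriv (PP q) (z * q) = - SS q (z * q) * PP q (z * q) / (z * q) := by
    field_simp; linear_combination k1
  have k2' : deriv (PP q) (q / z) = - SS q (q / z) * PP q (q / z) * z / q := by
    field_simp; field_simp at k2; linear_combination k2
  rw [k1', k2']
  field_simp
  ring

lemma LL_deriv {q : ℝ} (h0 : 0 < q) (h1 : q < 1) {z : ℂ} (hz : z ∈ annul q) :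
    HasDerivAt (LL q) (PI q z / z) z := by
  obtain ⟨ha, hb, hz0, hz1⟩ := hz
  have hq : (q : ℂ) ≠ 0 := by exact_mod_cast h0.ne'
  have hz1' : 1 - z ≠ 0 := sub_ne_zero.mpr (Ne.symm hz1)
  have i1 : HasDerivAt (fun x : ℂ => x * (q:ℂ)) (q:ℂ) z := by
    simpa using (hasDerivAt_id z).mul_const (q:ℂ)
  have i2 : HasDerivAt (fun x : ℂ => (q:ℂ) / x) (-(q:ℂ) / z ^ 2) z := by
    have := (hasDerivAt_inv hz0).const_mul (q:ℂ)
    simpa [div_eq_mul_inv] using this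
  have j1 := (SS_deriv h0 h1 ha).comp z i1
  have j2 := (SS_deriv h0 h1 hb).comp z i2
  have j0 := ((hasDerivAt_id z).div ((hasDerivAt_id z).const_sub 1) hz1').neg
  have j3 := (j0.sub j1).add j2
  refine j3.congr_deriv ?_
  unfold PI
  rw [VV_eq, VV_eq]
  simp only [id]
  field_simp
  ring

lemma TH_one_deriv {q : ℝ} (h0 : 0 < q) (h1 : q < 1) :
    HasDerivAt (TH q) (-(EE q) ^ 2) 1 := by
  have hd := PP_diff h0 h1
  have i2 : DifferentiableAt ℂ (fun x : ℂ => PP q (x * q) * PP q ((q:ℂ) / x)) 1 := by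
    apply DifferentiableAt.mul
    · exact (hd _).comp (1:ℂ) (by fun_prop)
    · exact (hd _).comp (1:ℂ) (by
        have : (1:ℂ) ≠ 0 := one_ne_zero
        fun_prop (disch := assumption))
  have j3 := ((hasDerivAt_id (1:ℂ)).const_sub 1).mul i2.hasDerivAt
  have e : TH q = ((fun x => 1 - id x) * (fun x : ℂ => PP q (x * q) * PP q ((q:ℂ) / x))) := by
    ext w
    simp only [TH, Pi.mul_apply, id]
    rw [← mul_assoc, ← PP_succ h0 h1]
  rw [← e] at j3
  refine j3.congr_deriv ?_
  simp [EE]; ring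

lemma TH_one {q : ℝ} (h0 : 0 < q) (h1 : q < 1) : TH q 1 = 0 := by
  rw [TH, PP_succ h0 h1]; simp

lemma TH_diff {q : ℝ} (h0 : 0 < q) (h1 : q < 1) {z : ℂ} (hz : z ≠ 0) :
    DifferentiableAt ℂ (TH q) z := by
  have hd := PP_diff h0 h1
  apply DifferentiableAt.mul (hd z)
  exact (hd _).comp z (by fun_prop (disch := assumption))

lemma BB_diff {q : ℝ} (h0 : 0 < q) (h1 : q < 1) {z : ℂ} (hz : z ≠ 0) :
    DifferentiableAt ℂ (BB q) z := by
  have hq : (q : ℂ) ≠ 0 := by exact_mod_cast h0.ne'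
  apply DifferentiableAt.const_mul
  exact (TH_diff (q := q ^ 2) (by positivity) (pow_lt_one₀ h0.le h1 (by norm_num))
    (by simp [hq, hz])).comp z (by fun_prop)

lemma DD_diff {q : ℝ} (h0 : 0 < q) (h1 : q < 1) {z : ℂ} (hz : z ≠ 0) :
    DifferentiableAt ℂ (DD q) z := by
  have hq : (q : ℂ) ≠ 0 := by exact_mod_cast h0.ne'
  apply DifferentiableAt.mul differentiableAt_id
  apply DifferentiableAt.const_mul
  exact (TH_diff (q := q ^ 2) (by positivity) (pow_lt_one₀ h0.le h1 (by norm_num))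
    (by simp [hq, hz])).comp z (by fun_prop)


lemma annul_nhds {q : ℝ} {z : ℂ} (hz : z ∈ annul q) : annul q ∈ nhds z := by
  obtain ⟨ha, hb, hz0, hz1⟩ := hz
  have c1 : ContinuousAt (fun z : ℂ => ‖z * (q:ℂ)‖) z := by fun_prop
  have c2 : ContinuousAt (fun z : ℂ => ‖(q:ℂ) / z‖) z := by fun_prop (disch := assumption)
  filter_upwards [c1.eventually (gt_mem_nhds ha), c2.eventually (gt_mem_nhds hb),
    isOpen_ne.mem_nhds hz0, isOpen_ne.mem_nhds hz1] with w a b c d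
  exact ⟨a, b, c, d⟩

lemma wp_step1 {q : ℝ} (h0 : 0 < q) (h1 : q < 1) {x y : ℂ} (hx : x ≠ 0) (hy : y ≠ 0)
    (ha : x * y ∈ annul q) (hb : x / y ∈ annul q) :
    (DD q x * BB q y - BB q x * DD q y) * (LL q (x * y) + LL q (x / y) - 1) =
      x * (deriv (DD q) x * BB q y - deriv (BB q) x * DD q y) := by
  have i1 : HasDerivAt (fun z : ℂ => z * y) y x := by
    simpa using (hasDerivAt_id x).mul_const y
  have i2 : HasDerivAt (fun z : ℂ => z / y) (1 / y) x := by
    simpa using (hasDerivAt_id x).div_const y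
  have j1 := (TH_deriv h0 h1 ha).comp x i1
  have j2 := (TH_deriv h0 h1 hb).comp x i2
  have l := (j1.const_mul (EE q ^ 2)).mul j2
  have rD := (DD_diff h0 h1 hx).hasDerivAt
  have rB := (BB_diff h0 h1 hx).hasDerivAt
  have r := (hasDerivAt_id x).mul ((rD.mul_const (BB q y)).sub (rB.mul_const (DD q y)))
  have e := l.unique (r.congr_of_eventuallyEq ?_)
  · have e2 := det_id h0 h1 hx hy
    simp only [Function.comp, id, Pi.sub_apply] at e
    have e3 : EE q ^ 2 * TH q (x * y) * TH q (x / y) * (LL q (x * y) + LL q (x / y)) / x =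
      (DD q x * BB q y - BB q x * DD q y) + x * (deriv (DD q) x * BB q y - deriv (BB q) x * DD q y) := by
      rw [show x * (deriv (DD q) x * BB q y - deriv (BB q) x * DD q y) = 
         1 * (DD q x * BB q y - BB q x * DD q y) + x * (deriv (DD q) x * BB q y - deriv (BB q) x * DD q y) - 1 * (DD q x * BB q y - BB q x * DD q y) by ring, ← e]
      field_simp
      ring
    rw [e2] at e3
    field_simp at e3
    linear_combination e3
  · filter_upwards [isOpen_ne.mem_nhds hx] with z hz
    simpa using det_id h0 h1 hz hy

lemma wr_id {q : ℝ} (h0 : 0 < q) (h1 : q < 1) {x : ℂ} (hx : x ≠ 0) :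
    x ^ 2 * (deriv (DD q) x * BB q x - deriv (BB q) x * DD q x) = - EE q ^ 4 * TH q (x ^ 2) := by
  have i1 : HasDerivAt (fun z : ℂ => z * x) x x := by
    simpa using (hasDerivAt_id x).mul_const x
  have i2 : HasDerivAt (fun z : ℂ => z / x) (1 / x) x := by
    simpa using (hasDerivAt_id x).div_const x
  have j1 := HasDerivAt.comp (h₂ := TH q) (h := fun z : ℂ => z * x) x
    (TH_diff h0 h1 (mul_ne_zero hx hx)).hasDerivAt i1
  have j2 := (HasDerivAt.comp (h₂ := TH q) (h₂' := -(EE q) ^ 2) x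
    (by rw [div_self hx]; exact TH_one_deriv h0 h1) i2)
  have l := (j1.const_mul (EE q ^ 2)).mul j2
  have rD := (DD_diff h0 h1 hx).hasDerivAt
  have rB := (BB_diff h0 h1 hx).hasDerivAt
  have r := (hasDerivAt_id x).mul ((rD.mul_const (BB q x)).sub (rB.mul_const (DD q x)))
  have e := l.unique (r.congr_of_eventuallyEq ?_)
  · simp only [Function.comp, id, Pi.sub_apply, div_self hx, TH_one h0 h1] at e
    field_simp at e
    linear_combination -e
  · filter_upwards [isOpen_ne.mem_nhds hx] with z hz
    simpa using det_id h0 h1 hz hx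

lemma wp_id {q : ℝ} (h0 : 0 < q) (h1 : q < 1) {x y : ℂ} (hx : x ≠ 0) (hy : y ≠ 0)
    (ha : x * y ∈ annul q) (hb : x / y ∈ annul q) :
    (TH q (x * y) * TH q (x / y)) ^ 2 * (PI q (x * y) - PI q (x / y)) =
      x / y * EE q ^ 4 * TH q (x ^ 2) * TH q (y ^ 2) := by
  have i1 : HasDerivAt (fun z : ℂ => x * z) x y := by
    simpa using (hasDerivAt_id y).const_mul x
  have i2 : HasDerivAt (fun z : ℂ => x / z) (-x / y ^ 2) y := by
    have := (hasDerivAt_inv hy).const_mul x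
    simpa [div_eq_mul_inv] using this
  have j1 := (LL_deriv h0 h1 ha).comp y i1
  have j2 := (LL_deriv h0 h1 hb).comp y i2
  have rD := (DD_diff h0 h1 hy).hasDerivAt
  have rB := (BB_diff h0 h1 hy).hasDerivAt
  have l := ((rB.const_mul (DD q x)).sub (rD.const_mul (BB q x))).mul
    ((j1.add j2).sub_const 1)
  have r := ((rB.const_mul (deriv (DD q) x)).sub (rD.const_mul (deriv (BB q) x))).const_mul x
  have e := l.unique (r.congr_of_eventuallyEq ?_)
  · have s1 := wp_step1 h0 h1 hx hy ha hb
    have wx := wr_id h0 h1 hx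
    have wy := wr_id h0 h1 hy
    have de := det_id h0 h1 hx hy
    simp only [Function.comp, Pi.sub_apply, Pi.add_apply] at e
    have hE : EE q ≠ 0 := EE_ne h0 h1
    generalize deriv (DD q) x = dx at *
    generalize deriv (DD q) y = dy at *
    generalize deriv (BB q) x = bx at *
    generalize deriv (BB q) y = by' at *
    generalize DD q x = Dx at *
    generalize DD q y = Dy at *
    generalize BB q x = Bx at *
    generalize BB q y = By at *
    generalize LL q (x * y) + LL q (x / y) - 1 = L at *
    generalize PI q (x * y) = p1 at *
    generalize PI q (x / y) = p2 at *
    generalize TH q (x * y) = t1 at *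
    generalize TH q (x / y) = t2 at *
    generalize TH q (x ^ 2) = t3 at *
    generalize TH q (y ^ 2) = t4 at *
    generalize EE q = E at *
    have e2 : (Dx * By - Bx * Dy) ^ 2 * (p1 - p2) = 
        x * y * (dx * Bx - bx * Dx) * (dy * By - by' * Dy) := by
      have e' : (Dx * by' - Bx * dy) * L + (Dx * By - Bx * Dy) * ((p1 - p2) / y) = 
        x * (dx * by' - bx * dy) := by
        rw [← e]; field_simp; ring
      have e'' : (Dx * by' - Bx * dy) * L * y + (Dx * By - Bx * Dy) * (p1 - p2) = 
        x * y * (dx * by' - bx * dy) := by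
        field_simp at e'; linear_combination e'
      linear_combination (Dx * By - Bx * Dy) * e'' - y * (Dx * by' - Bx * dy) * s1
    have e3 : E ^ 4 * ((t1 * t2) ^ 2 * (p1 - p2)) * y = E ^ 4 * (x * E ^ 4 * t3 * t4) := by
      have : x * y ≠ 0 := mul_ne_zero hx hy
      apply mul_left_cancel₀ this
      have q1 : E ^ 4 * ((t1 * t2) ^ 2 * (p1 - p2)) =
        x ^ 2 * ((Dx * By - Bx * Dy) ^ 2 * (p1 - p2)) := by
        linear_combination (p1 - p2) * (E ^ 2 * t1 * t2 + x * (Dx * By - Bx * Dy)) * de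
      rw [q1, e2]
      linear_combination y * x ^ 2 * (y ^ 2 * (dy * By - by' * Dy)) * wx - y * x ^ 2 * E ^ 4 * t3 * wy
    rw [mul_assoc] at e3
    have e4 := mul_left_cancel₀ (pow_ne_zero 4 hE) e3
    field_simp
    linear_combination e4
  · have c1 := i1.continuousAt.preimage_mem_nhds (annul_nhds ha)
    have c2 := i2.continuousAt.preimage_mem_nhds (annul_nhds hb)
    filter_upwards [isOpen_ne.mem_nhds hy, c1, c2] with z hz z1 z2
    have := wp_step1 h0 h1 hx hz z1 z2
    simpa using this


def chi (n : ℕ) : ℝ :=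
  if n % 10 = 1 ∨ n % 10 = 2 ∨ n % 10 = 8 ∨ n % 10 = 9 then 1
  else if n % 10 = 3 ∨ n % 10 = 4 ∨ n % 10 = 6 ∨ n % 10 = 7 then -1 else 0

lemma chi_abs (n : ℕ) : |chi n| ≤ 1 := by
  unfold chi; split_ifs <;> simp

noncomputable def LK (x : ℝ) : ℝ := ∑' n : ℕ, chi (n + 1) * log (1 - x ^ (n + 1))
noncomputable def TT (x : ℝ) : ℝ := ∑' n : ℕ, chi (n + 1) * ((n + 1) * x ^ (n + 1) / (1 - x ^ (n + 1)))

lemma TT_eq (x : ℝ) : TT x = - x * ∑' n : ℕ, chi (n + 1) * (-((n + 1) * x ^ n) / (1 - x ^ (n + 1))) := by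
  rw [TT, ← tsum_mul_left]
  exact tsum_congr fun n => by ring

lemma LK_aux {x r : ℝ} (hr : r < 1) (hx : |x| < r) (n : ℕ) : 1 - r ≤ 1 - x ^ (n + 1) := by
  have : x ^ (n + 1) ≤ |x| ^ (n + 1) := by rw [← abs_pow]; exact le_abs_self _
  have : |x| ^ (n + 1) ≤ |x| := by
    simpa using pow_le_pow_of_le_one (abs_nonneg x) (by linarith) (Nat.le_add_left 1 n)
  linarith

lemma LK_deriv {x : ℝ} (hx0 : 0 < x) (hx : x < 1) :
    Summable (fun n : ℕ => chi (n + 1) * log (1 - x ^ (n + 1))) ∧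
    HasDerivAt LK (∑' n : ℕ, chi (n + 1) * (-((n + 1) * x ^ n) / (1 - x ^ (n + 1)))) x := by
  obtain ⟨r, hr, hr1⟩ := exists_between hx
  have hr0 : 0 < r := by linarith
  have hu := VV_summable' hr0 hr1 hr0.le hr1
  have hg : ∀ (n : ℕ) (y : ℝ), y ∈ Metric.ball (0:ℝ) r →
      HasDerivAt (fun y : ℝ => chi (n + 1) * log (1 - y ^ (n + 1)))
        (chi (n + 1) * (-((n + 1) * y ^ n) / (1 - y ^ (n + 1)))) y := by
    intro n y hy
    have hy' : |y| < r := by simpa using hy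
    have := LK_aux hr1 hy' n
    have h2 := ((hasDerivAt_pow (n+1) y).const_sub 1).log (by linarith)
    have := h2.const_mul (chi (n + 1))
    simpa using this
  have hb : ∀ (n : ℕ) (y : ℝ), y ∈ Metric.ball (0:ℝ) r →
      ‖chi (n + 1) * (-((n + 1) * y ^ n) / (1 - y ^ (n + 1)))‖ ≤ ((n:ℝ) + 1) * r ^ n / (1 - r) := by
    intro n y hy
    have hy' : |y| < r := by simpa using hy
    have h3 := LK_aux hr1 hy' n
    have h4 : 0 < 1 - r := by linarith
    rw [Real.norm_eq_abs, abs_mul, abs_div, abs_neg, abs_mul, abs_pow,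
      abs_of_pos (show 0 < 1 - y ^ (n + 1) by linarith), abs_of_pos (show (0:ℝ) < n + 1 by positivity)]
    calc _ ≤ 1 * (((n:ℝ) + 1) * |y| ^ n / (1 - y ^ (n + 1))) := by
          apply mul_le_mul_of_nonneg_right (chi_abs _)
          have : 0 < 1 - y ^ (n + 1) := by linarith
          positivity
      _ ≤ _ := by
          rw [one_mul]
          gcongr
  have hxm : x ∈ Metric.ball (0:ℝ) r := by simpa [abs_of_pos hx0] using hr
  have h0m : (0:ℝ) ∈ Metric.ball (0:ℝ) r := by simpa using hr0
  have hs0 : Summable (fun n : ℕ => chi (n + 1) * log (1 - (0:ℝ) ^ (n + 1))) := by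
    simpa using summable_zero
  constructor
  · exact summable_of_summable_hasDerivAt_of_isPreconnected (g := fun (n:ℕ) (y:ℝ) => chi (n + 1) * log (1 - y ^ (n + 1)))
      (g' := fun (n:ℕ) (y:ℝ) => chi (n + 1) * (-((n + 1) * y ^ n) / (1 - y ^ (n + 1))))
      (y₀ := 0) (y := x) hu Metric.isOpen_ball
      (convex_ball _ _).isPreconnected hg hb h0m hs0 hxm
  · exact hasDerivAt_tsum_of_isPreconnected (g := fun (n:ℕ) (y:ℝ) => chi (n + 1) * log (1 - y ^ (n + 1)))
      (g' := fun (n:ℕ) (y:ℝ) => chi (n + 1) * (-((n + 1) * y ^ n) / (1 - y ^ (n + 1))))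
      (y₀ := 0) (y := x) hu Metric.isOpen_ball
      (convex_ball _ _).isPreconnected hg hb h0m hs0 hxm

lemma chi_val (j : ℕ) (a : ℕ) : chi (j * 10 + a) = chi a := by
  unfold chi
  have : (j * 10 + a) % 10 = a % 10 := by omega
  rw [this]

lemma ramK_hasProd {x : ℝ} (hx0 : 0 < x) (hx : x < 1) : HasProd (fun j : ℕ =>
    ((1 - x ^ (10 * j + 1)) * (1 - x ^ (10 * j + 2)) * (1 - x ^ (10 * j + 8)) *
        (1 - x ^ (10 * j + 9))) /
      ((1 - x ^ (10 * j + 3)) * (1 - x ^ (10 * j + 4)) * (1 - x ^ (10 * j + 6)) *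
        (1 - x ^ (10 * j + 7)))) (exp (LK x)) := by
  have hs := (LK_deriv hx0 hx).1.hasSum
  have hs2 := ((Nat.divModEquiv 10).symm.hasSum_iff.mpr hs)
  have hs3 := hs2.prod_fiberwise (fun j => hasSum_fintype _)
  have hs4 := hs3.rexp
  rw [LK]
  convert hs4 using 1
  funext j
  have hp : ∀ n : ℕ, 0 < 1 - x ^ (n + 1) := fun n => by
    have := pow_lt_one₀ hx0.le hx (Nat.succ_ne_zero n)
    simpa using this
  have e : ∀ a : Fin 10, ((fun n : ℕ => chi (n + 1) * log (1 - x ^ (n + 1))) ∘ (Nat.divModEquiv 10).symm) (j, a)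
     = chi (a.val + 1) * log (1 - x ^ (10 * j + a.val + 1)) := by
    intro a
    have : (Nat.divModEquiv 10).symm (j, a) = j * 10 + a.val := by simp [Nat.divModEquiv]
    simp only [Function.comp, this]
    rw [add_assoc, chi_val]
    congr 4; ring
  simp only [Function.comp_def] at e ⊢
  simp only [e, Fin.sum_univ_succ]
  simp [chi, Fin.succ]
  simp only [exp_add, exp_neg]
  simp only [exp_log (hp _), div_eq_mul_inv, mul_inv]
  ring

lemma ramK_eq {x : ℝ} (hx0 : 0 < x) (hx : x < 1) : ramK x = x * exp (LK x) := by
  rw [ramK, (ramK_hasProd hx0 hx).tprod_eq]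

lemma ramK_deriv {x : ℝ} (hx0 : 0 < x) (hx : x < 1) :
    HasDerivAt ramK (ramK x * (1 - TT x) / x) x := by
  have h := (hasDerivAt_id x).mul (LK_deriv hx0 hx).2.exp
  have h2 : HasDerivAt ramK _ x := h.congr_of_eventuallyEq (by
    filter_upwards [isOpen_Ioo.mem_nhds (show x ∈ Set.Ioo (0:ℝ) 1 from ⟨hx0, hx⟩)] with y hy
    simpa using ramK_eq hy.1 hy.2)
  refine h2.congr_deriv ?_
  rw [TT_eq, ramK_eq hx0 hx]
  simp only [id]
  field_simp
  ring


lemma PP5 {q : ℝ} (h0 : 0 < q) (h1 : q < 1) {a b c d : ℂ}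
    (h : ∀ t : ℂ, (1 - t) * (1 - a * t) * (1 - b * t) * (1 - c * t) * (1 - d * t) = 1 - t ^ 5) (x : ℂ) :
    PP q x * PP q (a * x) * PP q (b * x) * PP q (c * x) * PP q (d * x) = PP (q ^ 5) (x ^ 5) := by
  have m := fun x => PP_mult h0 h1 x
  have := ((((m x).mul (m (a * x))).mul (m (b * x))).mul (m (c * x))).tprod_mul (m (d * x))
  rw [(((m x).mul (m (a * x))).mul (m (b * x))).tprod_mul (m (c * x)),
    ((m x).mul (m (a * x))).tprod_mul (m (b * x)), (m x).tprod_mul (m (a * x))] at this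
  unfold PP
  rw [← this]
  refine tprod_congr fun j => ?_
  rw [mul_assoc a, mul_assoc b, mul_assoc c, mul_assoc d, h, mul_pow]
  push_cast
  rw [← pow_mul, ← pow_mul, mul_comm j]

lemma TH_unit {q : ℝ} (h0 : 0 < q) (h1 : q < 1) {z w : ℂ} (h : z * w = 1) :
    TH q z = (1 - z) * (PP q (z * q) * PP q (w * q)) := by
  have hz : z ≠ 0 := by rintro rfl; simp at h
  have : (q:ℂ) / z = w * q := by field_simp; linear_combination -(q:ℂ) * h
  rw [TH, PP_succ h0 h1, this]; ring

lemma exists_zeta : ∃ ζ : ℂ, ‖ζ‖ = 1 ∧ ζ ^ 4 - ζ ^ 3 + ζ ^ 2 - ζ + 1 = 0 := by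
  have hp := Complex.isPrimitiveRoot_exp 10 (by norm_num)
  set ζ := Complex.exp (2 * π * Complex.I / (10 : ℕ)) with hz
  refine ⟨ζ, hp.norm'_eq_one (by norm_num), ?_⟩
  have h10 : ζ ^ 10 = 1 := hp.pow_eq_one
  have h5 : ζ ^ 5 ≠ 1 := hp.pow_ne_one_of_pos_of_lt (by norm_num) (by norm_num)
  have h2 : ζ ^ 2 ≠ 1 := hp.pow_ne_one_of_pos_of_lt (by norm_num) (by norm_num)
  have h5' : ζ ^ 5 + 1 = 0 := by
    apply mul_left_cancel₀ (sub_ne_zero.mpr h5)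
    linear_combination h10
  have hm : ζ + 1 ≠ 0 := by
    intro h
    apply h2
    linear_combination (ζ - 1) * h
  apply mul_left_cancel₀ hm
  linear_combination h5'

lemma zeta_prod {ζ : ℂ} (hc : ζ ^ 4 - ζ ^ 3 + ζ ^ 2 - ζ + 1 = 0) (t : ℂ) :
    (1 - t) * (1 - ζ ^ 2 * t) * (1 - ζ ^ 4 * t) * (1 - (-ζ) * t) * (1 - (-ζ ^ 3) * t) = 1 - t ^ 5 := by
  linear_combination ((-1)*t^1 + (1)*t^5 + (-1)*ζ^1*t^2 + (1)*ζ^1*t^5 + (-1)*ζ^3*t^2 + (1)*ζ^3*t^3 + (1)*ζ^5*t^3 + (-1)*ζ^5*t^5 + (1)*ζ^6*t^4 + (-1)*ζ^6*t^5) * hc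

lemma zeta_a {ζ : ℂ} (hc : ζ ^ 4 - ζ ^ 3 + ζ ^ 2 - ζ + 1 = 0) :
    ζ ^ 3 * (1 - ζ ^ 4) * (1 - - ζ ^ 3) = (ζ - ζ ^ 4 - ζ ^ 3 + ζ ^ 2) * ((1 - ζ) * (1 - ζ ^ 3)) ^ 2 := by
  linear_combination ((-1)*ζ^1 + (4)*ζ^3 + (3)*ζ^4 + (-3)*ζ^5 + (-4)*ζ^6 + (1)*ζ^8) * hc

lemma zeta_b {ζ : ℂ} (hc : ζ ^ 4 - ζ ^ 3 + ζ ^ 2 - ζ + 1 = 0) (h1 : 1 - ζ ≠ 0) (h3 : 1 - ζ ^ 3 ≠ 0) :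
    ζ ^ 3 / (1 - ζ ^ 3) ^ 2 - ζ / (1 - ζ) ^ 2 = ζ - ζ ^ 4 - ζ ^ 3 + ζ ^ 2 := by
  rw [div_sub_div _ _ (by simpa) (by simpa), div_eq_iff (by simp [h1, h3])]
  linear_combination ((-2)*ζ^1 + (-1)*ζ^2 + (4)*ζ^3 + (3)*ζ^4 + (-2)*ζ^5 + (-3)*ζ^6 + (1)*ζ^8) * hc

lemma zeta_chi {ζ : ℂ} (hc : ζ ^ 4 - ζ ^ 3 + ζ ^ 2 - ζ + 1 = 0) (n : ℕ) :
    ζ ^ n + (-ζ ^ 4) ^ n - (ζ ^ 3) ^ n - (- ζ ^ 2) ^ n = (ζ - ζ ^ 4 - ζ ^ 3 + ζ ^ 2) * chi n := by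
  have h5 : ζ ^ 5 = -1 := by linear_combination (ζ + 1) * hc
  have h10 : ζ ^ 10 = 1 := by linear_combination (ζ ^ 5 - 1) * h5
  rw [pow_eq_pow_mod n h10, pow_eq_pow_mod n (show (-ζ ^ 4) ^ 10 = 1 by
      rw [neg_pow, ← pow_mul, mul_comm, pow_mul ζ 10 4, h10]; norm_num),
    pow_eq_pow_mod n (show (ζ ^ 3) ^ 10 = 1 by
      rw [← pow_mul, mul_comm, pow_mul ζ 10 3, h10]; norm_num),
    pow_eq_pow_mod n (show (-ζ ^ 2) ^ 10 = 1 by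
      rw [neg_pow, ← pow_mul, mul_comm, pow_mul ζ 10 2, h10]; norm_num)]
  unfold chi
  have hr : n % 10 < 10 := Nat.mod_lt _ (by norm_num)
  generalize n % 10 = r at *
  interval_cases r <;> norm_num <;> grind

lemma VV_summable {q : ℝ} (h0 : 0 < q) (h1 : q < 1) {x : ℂ} (hx : ‖x‖ < 1) :
    Summable (fun n : ℕ => ((n : ℂ) + 1) * x ^ (n + 1) / (1 - (q:ℂ) ^ (n + 1))) := by
  refine Summable.of_norm_bounded (g := fun n : ℕ => ((n:ℝ) + 1) * ‖x‖ ^ n / (1 - q))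
    (VV_summable' h0 h1 (norm_nonneg x) hx) fun n => ?_
  rw [norm_div, norm_mul, norm_pow]
  have hn : ‖(n:ℂ) + 1‖ = (n:ℝ) + 1 := by
    have : ((n:ℂ) + 1) = ((n + 1 : ℕ) : ℂ) := by push_cast; rfl
    rw [this, Complex.norm_natCast]; push_cast; rfl
  rw [hn]
  have := den_ge h0 h1 n
  have h2 : 0 < 1 - q := by linarith
  exact div_le_div₀ (by positivity) (mul_le_mul_of_nonneg_left
    (pow_le_pow_of_le_one (norm_nonneg _) hx.le (Nat.le_succ n)) (by positivity)) h2 this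

lemma zeta_VV {q : ℝ} (h0 : 0 < q) (h1 : q < 1) {ζ : ℂ} (hn : ‖ζ‖ = 1) (hc : ζ ^ 4 - ζ ^ 3 + ζ ^ 2 - ζ + 1 = 0) :
    VV q (ζ * q) + VV q (-ζ ^ 4 * q) - VV q (ζ ^ 3 * q) - VV q (- ζ ^ 2 * q) =
     (ζ - ζ ^ 4 - ζ ^ 3 + ζ ^ 2) * TT q := by
  have hq : ‖(q:ℂ)‖ < 1 := by rw [Complex.norm_real, Real.norm_of_nonneg h0.le]; exact h1
  have s1 := VV_summable h0 h1 (x := ζ * q) (by simpa [hn] using hq)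
  have s2 := VV_summable h0 h1 (x := -ζ ^ 4 * q) (by simpa [hn] using hq)
  have s3 := VV_summable h0 h1 (x := ζ ^ 3 * q) (by simpa [hn] using hq)
  have s4 := VV_summable h0 h1 (x := -ζ ^ 2 * q) (by simpa [hn] using hq)
  have hs := ((s1.hasSum.add s2.hasSum).sub s3.hasSum).sub s4.hasSum
  unfold VV
  rw [← hs.tsum_eq, TT, Complex.ofReal_tsum, ← tsum_mul_left]
  refine tsum_congr fun n => ?_
  have := zeta_chi hc (n + 1)
  push_cast
  simp only [mul_pow]
  linear_combination ((n:ℂ) + 1) * (q:ℂ) ^ (n + 1) / (1 - (q:ℂ) ^ (n + 1)) * this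

lemma idA {q : ℝ} (h0 : 0 < q) (h1 : q < 1) :
    (1 - (TT q : ℂ)) * EE (q ^ 10) ^ 2 = EE q * EE (q ^ 2) ^ 2 * EE (q ^ 5) ^ 3 := by
  obtain ⟨ζ, hn, hc⟩ := exists_zeta
  have h5 : ζ ^ 5 = -1 := by linear_combination (ζ + 1) * hc
  have hz0 : ζ ≠ 0 := by rintro rfl; simp at hn
  have z1 : ζ ≠ 1 := by rintro rfl; norm_num at hc
  have z3 : ζ ^ 3 ≠ 1 := by
    intro h
    have : ζ ^ 2 = -1 := by linear_combination h5 - ζ ^ 2 * h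
    have h1 : ζ = -1 := by linear_combination ζ * this - h
    rw [h1] at this; norm_num at this
  have hs : ζ - ζ ^ 4 - ζ ^ 3 + ζ ^ 2 ≠ 0 := by
    intro h
    have h2 : (ζ - ζ ^ 4 - ζ ^ 3 + ζ ^ 2) ^ 2 = 5 := by
      grind
    rw [h] at h2; norm_num at h2
  have an : ∀ z : ℂ, ‖z‖ = 1 → z ≠ 1 → z ∈ annul q := by
    intro z hz hz1
    refine ⟨?_, ?_, ?_, hz1⟩
    · rw [norm_mul, hz, Complex.norm_real, Real.norm_of_nonneg h0.le]; simpa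
    · rw [norm_div, hz, Complex.norm_real, Real.norm_of_nonneg h0.le]; simpa
    · rintro rfl; simp at hz
  have w := wp_id h0 h1 (x := ζ ^ 2) (y := - ζ ^ 4) (by simpa) (by simpa)
    (by rw [show ζ ^ 2 * - ζ ^ 4 = ζ by linear_combination -ζ * h5]; exact an _ hn z1)
    (by rw [show ζ ^ 2 / - ζ ^ 4 = ζ ^ 3 by
          field_simp; linear_combination -h5]
        exact an _ (by simp [hn]) z3)
  rw [show ζ ^ 2 * - ζ ^ 4 = ζ by linear_combination -ζ * h5,
    show ζ ^ 2 / - ζ ^ 4 = ζ ^ 3 by field_simp; linear_combination -h5,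
    show (ζ ^ 2) ^ 2 = ζ ^ 4 by ring, show (- ζ ^ 4) ^ 2 = - ζ ^ 3 by linear_combination ζ ^ 3 * h5] at w
  rw [TH_unit h0 h1 (z := ζ) (w := - ζ ^ 4) (by linear_combination -h5),
    TH_unit h0 h1 (z := ζ ^ 3) (w := - ζ ^ 2) (by linear_combination -h5),
    TH_unit h0 h1 (z := ζ ^ 4) (w := - ζ) (by linear_combination -h5),
    TH_unit h0 h1 (z := - ζ ^ 3) (w := ζ ^ 2) (by linear_combination -h5)] at w
  have hpr : ∀ t : ℂ, (1 - t) * (1 - ζ ^ 2 * t) * (1 - ζ ^ 4 * t) * (1 - (-ζ) * t) * (1 - (-ζ ^ 3) * t)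
      = 1 - t ^ 5 := by
    exact zeta_prod hc
  have m1 := PP5 h0 h1 hpr q
  have m2 := PP5 h0 h1 hpr (-q)
  have m3 := PP_mul_neg h0 h1 q
  have m4 := PP_mul_neg (q := q ^ 5) (by positivity) (pow_lt_one₀ h0.le h1 (by norm_num)) (q ^ 5)
  have hPI : PI q ζ - PI q (ζ ^ 3) = (ζ - ζ ^ 4 - ζ ^ 3 + ζ ^ 2) * (1 - TT q) := by
    have v := zeta_VV h0 h1 hn hc
    have b := zeta_b hc (sub_ne_zero.mpr z1.symm) (sub_ne_zero.mpr z3.symm)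
    unfold PI
    rw [show (q:ℂ) / ζ = - ζ ^ 4 * q by field_simp; linear_combination (q:ℂ) * h5,
      show (q:ℂ) / ζ ^ 3 = - ζ ^ 2 * q by field_simp; linear_combination (q:ℂ) * h5]
    linear_combination b - v
  rw [hPI] at w
  have za := zeta_a hc
  have hE := EE_ne h0 h1
  have hE2 := EE_ne (q := q ^ 2) (by positivity) (pow_lt_one₀ h0.le h1 (by norm_num))
  have hE5 := EE_ne (q := q ^ 5) (by positivity) (pow_lt_one₀ h0.le h1 (by norm_num))
  have f1 : PP q q = EE q := rfl
  have f2 : PP (q ^ 2) ((q:ℂ) ^ 2) = EE (q ^ 2) := by simp [EE]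
  have f5 : PP (q ^ 5) ((q:ℂ) ^ 5) = EE (q ^ 5) := by simp [EE]
  have f10 : PP ((q ^ 5) ^ 2) (((q:ℂ) ^ 5) ^ 2) = EE (q ^ 10) := by simp [EE, ← pow_mul]
  rw [f1, f5] at m1
  rw [f1, f2] at m3
  rw [f5, f10] at m4
  rw [show ζ ^ 2 * -(q:ℂ) = -ζ ^ 2 * q by ring, show ζ ^ 4 * -(q:ℂ) = -ζ ^ 4 * q by ring,
    show -ζ * -(q:ℂ) = ζ * q by ring, show -ζ ^ 3 * -(q:ℂ) = ζ ^ 3 * q by ring,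
    show (-(q:ℂ)) ^ 5 = - (q:ℂ) ^ 5 by ring] at m2
  generalize PP q (ζ * q) = a1 at *
  generalize PP q (ζ ^ 3 * q) = a3 at *
  generalize PP q (-ζ ^ 4 * q) = a9 at *
  generalize PP q (-ζ ^ 2 * q) = a7 at *
  generalize PP q (ζ ^ 2 * q) = a2 at *
  generalize PP q (ζ ^ 4 * q) = a4 at *
  generalize PP q (-ζ * q) = a6 at *
  generalize PP q (-ζ ^ 3 * q) = a8 at *
  generalize PP q (-(q:ℂ)) = b1 at *
  generalize PP (q ^ 5) (-(q:ℂ) ^ 5) = b5 at *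
  generalize EE (q ^ 10) = E10 at *
  generalize EE (q ^ 5) = E5 at *
  generalize EE (q ^ 2) = E2 at *
  generalize EE q = E1 at *
  generalize (TT q : ℂ) = T at *
  have hk : (ζ - ζ ^ 4 - ζ ^ 3 + ζ ^ 2) * ((1 - ζ) * (1 - ζ ^ 3)) ^ 2 ≠ 0 :=
    mul_ne_zero hs (pow_ne_zero 2 (mul_ne_zero (sub_ne_zero.mpr z1.symm) (sub_ne_zero.mpr z3.symm)))
  have w2 : (a1 * a9 * a3 * a7) ^ 2 * (1 - T) = E1 ^ 4 * (a2 * a4 * a6 * a8) := by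
    apply mul_left_cancel₀ hk
    linear_combination w + (E1 ^ 4 * (a2 * a4 * a6 * a8)) * za
  have w3 : (a1 * a9 * a3 * a7) ^ 2 * (1 - T) = E1 ^ 3 * E5 := by
    linear_combination w2 + E1 ^ 3 * m1
  have w4 : E1 * b1 = E2 := m3
  have w5 : b5 ^ 2 * (1 - T) = b1 ^ 2 * (E1 ^ 3 * E5) := by
    rw [← w3, ← m2]; ring
  rw [← m4, ← m3]
  linear_combination E5 ^ 2 * w5


noncomputable def pp (q : ℝ) (a : ℕ) : ℂ := PP (q ^ 10) ((q:ℂ) ^ a)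

lemma J_eq {q : ℝ} (h0 : 0 < q) (a b : ℕ) (h : a + b = 10) :
    TH (q ^ 10) ((q:ℂ) ^ a) = pp q a * pp q b := by
  have hq : (q : ℂ) ≠ 0 := by exact_mod_cast h0.ne'
  have : ((q ^ 10 : ℝ) : ℂ) / (q:ℂ) ^ a = (q:ℂ) ^ b := by
    push_cast; rw [← h, pow_add]; field_simp
  rw [TH, this]; rfl

lemma E1_eq {q : ℝ} (h0 : 0 < q) (h1 : q < 1) : EE q = pp q 1 * pp q 2 * pp q 3 * pp q 4 * pp q 5 *
    pp q 6 * pp q 7 * pp q 8 * pp q 9 * pp q 10 := by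
  rw [EE, PP_dissect h0 h1 q 10 (by norm_num)]
  simp only [Finset.prod_range_succ, Finset.prod_range_zero, ← pow_succ', pp]
  norm_num

lemma E2_eq {q : ℝ} (h0 : 0 < q) (h1 : q < 1) : EE (q ^ 2) = pp q 2 * pp q 4 *
    pp q 6 * pp q 8 * pp q 10 := by
  rw [EE, PP_dissect (by positivity) (pow_lt_one₀ h0.le h1 (by norm_num)) _ 5 (by norm_num)]
  simp only [Finset.prod_range_succ, Finset.prod_range_zero, ← pow_succ', pp]
  push_cast
  simp only [← pow_mul]
  norm_num

lemma E5_eq {q : ℝ} (h0 : 0 < q) (h1 : q < 1) : EE (q ^ 5) = pp q 5 * pp q 10 := by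
  rw [EE, PP_dissect (by positivity) (pow_lt_one₀ h0.le h1 (by norm_num)) _ 2 (by norm_num)]
  simp only [Finset.prod_range_succ, Finset.prod_range_zero, ← pow_succ', pp]
  push_cast
  simp only [← pow_mul]
  norm_num

lemma E10_eq {q : ℝ} : EE (q ^ 10) = pp q 10 := by
  rw [EE, pp]; push_cast; rfl

lemma idB {q : ℝ} (h0 : 0 < q) (h1 : q < 1) :
    (TH (q^10) ((q:ℂ)^3) * TH (q^10) ((q:ℂ)^4)) ^ 2 - (q * TH (q^10) ((q:ℂ)^1) * TH (q^10) ((q:ℂ)^2)) ^ 2 =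
    TH (q^10) ((q:ℂ)^5) ^ 2 * TH (q^10) ((q:ℂ)^2) * TH (q^10) ((q:ℂ)^4) := by
  have H0 : 0 < q ^ 10 := by positivity
  have H1 : q ^ 10 < 1 := pow_lt_one₀ h0.le h1 (by norm_num)
  set t : ℂ := ((√q : ℝ) : ℂ) with ht
  have ht2 : (q:ℂ) = t ^ 2 := by rw [ht]; norm_cast; rw [Real.sq_sqrt h0.le]
  have hq : (q : ℂ) ≠ 0 := by exact_mod_cast h0.ne'
  have t0 : t ≠ 0 := by rintro h; rw [h] at ht2; simp [hq] at ht2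
  have p := fun n => pow_ne_zero n t0
  have d1 := det_id H0 H1 (p 7) (p 1)
  have d2 := det_id H0 H1 (p 11) (p 3)
  have d3 := det_id H0 H1 (p 7) (p 3)
  have d4 := det_id H0 H1 (p 11) (p 1)
  have d5 := det_id H0 H1 (p 11) (p 7)
  have d6 := det_id H0 H1 (p 3) (p 1)
  have c : ∀ a, t ^ (2 * a) = (q:ℂ) ^ a := fun a => by rw [ht2, pow_mul]
  have dv : ∀ a b e, a = b + e → t ^ a / t ^ b = t ^ e := fun a b e h => by
    rw [h, pow_add]; field_simp
  rw [← pow_add, dv 7 1 6 rfl, c 4, c 3] at d1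
  rw [← pow_add, dv 11 3 8 rfl, c 7, c 4] at d2
  rw [← pow_add, dv 7 3 4 rfl, c 5, c 2] at d3
  rw [← pow_add, dv 11 1 10 rfl, c 6, c 5] at d4
  rw [← pow_add, dv 11 7 4 rfl, c 9, c 2] at d5
  rw [← pow_add, dv 3 1 2 rfl, c 2, c 1] at d6
  rw [show TH (q^10) ((q:ℂ)^7) = TH (q^10) ((q:ℂ)^3) by
    rw [J_eq h0 7 3 rfl, J_eq h0 3 7 rfl, mul_comm]] at d2
  rw [show TH (q^10) ((q:ℂ)^6) = TH (q^10) ((q:ℂ)^4) by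
    rw [J_eq h0 6 4 rfl, J_eq h0 4 6 rfl, mul_comm]] at d4
  rw [show TH (q^10) ((q:ℂ)^9) = TH (q^10) ((q:ℂ)^1) by
    rw [J_eq h0 9 1 rfl, J_eq h0 1 9 rfl, mul_comm]] at d5
  have hE := EE_ne H0 H1
  generalize TH (q^10) ((q:ℂ)^1) = J1 at *
  generalize TH (q^10) ((q:ℂ)^2) = J2 at *
  generalize TH (q^10) ((q:ℂ)^3) = J3 at *
  generalize TH (q^10) ((q:ℂ)^4) = J4 at *
  generalize TH (q^10) ((q:ℂ)^5) = J5 at *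
  generalize EE (q^10) = E at *
  generalize DD (q^10) (t^7) = D7 at *
  generalize DD (q^10) (t^1) = D1 at *
  generalize DD (q^10) (t^11) = D11 at *
  generalize DD (q^10) (t^3) = D3 at *
  generalize BB (q^10) (t^7) = B7 at *
  generalize BB (q^10) (t^1) = B1 at *
  generalize BB (q^10) (t^11) = B11 at *
  generalize BB (q^10) (t^3) = B3 at *
  rw [mul_assoc (q:ℂ), mul_pow (q:ℂ), show (q:ℂ) ^ 2 = t ^ 4 by rw [ht2]; ring]
  have k1 : E ^ 4 * (J3 * J4) ^ 2 = t ^ 18 * (D7 * B1 - B7 * D1) * (D11 * B3 - B11 * D3) := by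
    linear_combination E ^ 2 * J3 * J4 * d1 + t ^ 7 * (D7 * B1 - B7 * D1) * d2
  have k2 : E ^ 4 * (J5 ^ 2 * J2 * J4) = t ^ 18 * (D7 * B3 - B7 * D3) * (D11 * B1 - B11 * D1) := by
    linear_combination E ^ 2 * J5 * J4 * d3 + t ^ 7 * (D7 * B3 - B7 * D3) * d4
  have k3 : E ^ 4 * (t ^ 4 * (J1 * J2) ^ 2) = t ^ 18 * (D11 * B7 - B11 * D7) * (D3 * B1 - B3 * D1) := by
    linear_combination t ^ 4 * (E ^ 2 * J1 * J2 * d5 + t ^ 11 * (D11 * B7 - B11 * D7) * d6)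
  apply mul_left_cancel₀ (pow_ne_zero 4 hE)
  linear_combination k1 - k2 - k3

lemma ramK_cx {q : ℝ} (h0 : 0 < q) (h1 : q < 1) :
    (ramK q : ℂ) * (pp q 3 * pp q 4 * pp q 6 * pp q 7) = q * (pp q 1 * pp q 2 * pp q 8 * pp q 9) := by
  have H0 : 0 < q ^ 10 := by positivity
  have H1 : q ^ 10 < 1 := pow_lt_one₀ h0.le h1 (by norm_num)
  have m : ∀ a, HasProd (fun j : ℕ => 1 - (q:ℂ) ^ (10 * j + a)) (pp q a) := fun a => by
    convert (PP_mult H0 H1 ((q:ℂ) ^ a)).hasProd using 1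
    · funext j; push_cast; rw [← pow_mul, ← pow_add, add_comm]
    · rfl
  have hR := (ramK_hasProd h0 h1).map Complex.ofRealHom Complex.continuous_ofReal
  have l := hR.mul ((((m 3).mul (m 4)).mul (m 6)).mul (m 7))
  have r := (((m 1).mul (m 2)).mul (m 8)).mul (m 9)
  have e := l.unique (r.congr_fun ?_)
  · rw [ramK_eq h0 h1]; push_cast
    simp only [Complex.ofRealHom_eq_coe, Complex.ofReal_exp] at e
    linear_combination (q:ℂ) * e
  · intro j
    have n : ∀ a, a ≠ 0 → 1 - (q:ℂ) ^ (10 * j + a) ≠ 0 := fun a ha => by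
      obtain ⟨b, rfl⟩ := Nat.exists_eq_succ_of_ne_zero ha
      exact den_ne h0 h1 (10 * j + b)
    have n3 := n 3 (by norm_num)
    have n4 := n 4 (by norm_num)
    have n6 := n 6 (by norm_num)
    have n7 := n 7 (by norm_num)
    simp only [Function.comp, Complex.ofRealHom_eq_coe]
    push_cast
    field_simp

lemma kX {q : ℝ} (h0 : 0 < q) (h1 : q < 1) :
    (1 - (ramK q : ℂ) ^ 2) * (q * EE q * EE (q ^ 10) ^ 5) = ramK q * (EE (q ^ 2) * EE (q ^ 5) ^ 5) := by
  have hE := EE_ne h0 h1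
  have b := idB h0 h1
  have k := ramK_cx h0 h1
  rw [J_eq h0 1 9 rfl, J_eq h0 2 8 rfl, J_eq h0 3 7 rfl, J_eq h0 4 6 rfl, J_eq h0 5 5 rfl] at b
  rw [E1_eq h0 h1] at hE ⊢
  rw [E2_eq h0 h1, E5_eq h0 h1, E10_eq]
  simp only [mul_ne_zero_iff] at hE
  obtain ⟨⟨⟨⟨⟨⟨⟨⟨⟨n1, n2⟩, n3⟩, n4⟩, n5⟩, n6⟩, n7⟩, n8⟩, n9⟩, n10⟩ := hE
  generalize pp q 1 = p1 at *
  generalize pp q 2 = p2 at *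
  generalize pp q 3 = p3 at *
  generalize pp q 4 = p4 at *
  generalize pp q 5 = p5 at *
  generalize pp q 6 = p6 at *
  generalize pp q 7 = p7 at *
  generalize pp q 8 = p8 at *
  generalize pp q 9 = p9 at *
  generalize pp q 10 = p10 at *
  generalize (ramK q : ℂ) = K at *
  have b2 : (p3 * p4 * p6 * p7) ^ 2 * (1 - K ^ 2) = (p5 * p5) ^ 2 * (p2 * p8) * (p4 * p6) := by
    linear_combination b - (K * (p3 * p4 * p6 * p7) + q * (p1 * p2 * p8 * p9)) * k
  have hne : p3 * p7 * p4 * p6 ≠ 0 := by simp [n3, n4, n6, n7]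
  have b3 : (1 - K ^ 2) * (q * (p1 * p9 * p3 * p7)) = K * p5 ^ 4 := by
    apply mul_left_cancel₀ (pow_ne_zero 2 hne)
    linear_combination (q * (p1 * p9 * p3 * p7)) * b2 - p5 ^ 4 * (p3 * p7 * p4 * p6) * k
  linear_combination p2 * p4 * p5 * p6 * p8 * p10 ^ 6 * b3

lemma idC {q : ℝ} (h0 : 0 < q) (h1 : q < 1) :
    EE q ^ 4 * EE (q ^ 5) * EE (q ^ 10) ^ 2 = EE (q ^ 2) ^ 2 * EE (q ^ 5) ^ 5 
      - 4 * q * EE q * EE (q ^ 2) * EE (q ^ 10) ^ 5 := by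
  have hq : (q : ℂ) ≠ 0 := by exact_mod_cast h0.ne'
  have f := phi_id h0 h1
  have o : EE q = PP (q ^ 2) q * EE (q ^ 2) := by
    rw [EE, PP_dissect h0 h1 q 2 (by norm_num)]
    simp [Finset.prod_range_succ, EE, pow_two]
  have o2 : TH (q ^ 2) q = PP (q ^ 2) q ^ 2 := by
    rw [TH, show ((q ^ 2 : ℝ) : ℂ) / q = q by push_cast; field_simp]; ring
  rw [o2, show TH (q ^ 10) (q:ℂ) = TH (q ^ 10) ((q:ℂ) ^ 1) by simp, J_eq h0 1 9 rfl,
    J_eq h0 3 7 rfl, J_eq h0 5 5 rfl] at f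
  have g : (EE (q ^ 2) * PP (q ^ 2) q ^ 2) ^ 2 * EE (q ^ 2) ^ 2 = EE q ^ 4 := by rw [o]; ring
  rw [← g, f]
  rw [E1_eq h0 h1, E2_eq h0 h1, E5_eq h0 h1, E10_eq]
  ring

lemma idD {q : ℝ} (h0 : 0 < q) (h1 : q < 1) :
    EE (q ^ 2) ^ 4 * EE (q ^ 5) ^ 2 * EE (q ^ 10) = q * EE q ^ 2 * EE (q ^ 10) ^ 5
      + EE q * EE (q ^ 2) * EE (q ^ 5) ^ 5 := by
  have hq : (q : ℂ) ≠ 0 := by exact_mod_cast h0.ne'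
  have f := psi_id h0 h1
  have H0 : 0 < q ^ 5 := by positivity
  have H1 : q ^ 5 < 1 := pow_lt_one₀ h0.le h1 (by norm_num)
  have th : ∀ {r : ℝ} (_ : 0 < r) (_ : r < 1), TH r (-(r:ℂ)) = 2 * PP r (-(r:ℂ)) ^ 2 := by
    intro r hr hr1
    have : (r : ℂ) ≠ 0 := by exact_mod_cast hr.ne'
    rw [TH, div_neg, div_self this, PP_succ hr hr1 (-1)]
    ring_nf
  have t1 := th h0 h1
  have t5 := th H0 H1
  have m := PP_mul_neg h0 h1 q
  have n := PP_mul_neg H0 H1 ((q ^ 5 : ℝ) : ℂ)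
  have dd := PP_dissect h0 h1 (-(q:ℂ)) 5 (by norm_num)
  have u1 : TH (q ^ 5) (-(q:ℂ)) = PP (q ^ 5) (-(q:ℂ)) * PP (q ^ 5) (-(q:ℂ) ^ 4) := by
    rw [TH, show ((q ^ 5 : ℝ) : ℂ) / (-(q:ℂ)) = -(q:ℂ) ^ 4 by push_cast; field_simp]
  have u2 : TH (q ^ 5) (-(q:ℂ) ^ 2) = PP (q ^ 5) (-(q:ℂ) ^ 2) * PP (q ^ 5) (-(q:ℂ) ^ 3) := by
    rw [TH, show ((q ^ 5 : ℝ) : ℂ) / (-(q:ℂ) ^ 2) = -(q:ℂ) ^ 3 by push_cast; field_simp]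
  simp only [Finset.prod_range_succ, Finset.prod_range_zero, neg_mul, ← pow_succ', one_mul] at dd
  norm_num at dd
  have f1 : PP q q = EE q := rfl
  have f2 : PP (q ^ 2) ((q:ℂ) ^ 2) = EE (q ^ 2) := by simp [EE]
  have f5 : PP (q ^ 5) ((q ^ 5 : ℝ) : ℂ) = EE (q ^ 5) := rfl
  have f10 : PP ((q ^ 5) ^ 2) (((q ^ 5 : ℝ) : ℂ) ^ 2) = EE (q ^ 10) := by simp [EE, ← pow_mul]
  rw [f1, f2] at m
  rw [f5, f10] at n
  push_cast at t5 n
  rw [t1, t5, u1, u2] at f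
  have hE5 := EE_ne H0 H1
  have hE1 := EE_ne h0 h1
  rw [← m, ← n]
  generalize PP (q ^ 5) (-(q:ℂ)) = a1 at *
  generalize PP (q ^ 5) (-(q:ℂ) ^ 2) = a2 at *
  generalize PP (q ^ 5) (-(q:ℂ) ^ 3) = a3 at *
  generalize PP (q ^ 5) (-(q:ℂ) ^ 4) = a4 at *
  generalize PP (q ^ 5) (-(q:ℂ) ^ 5) = N at *
  generalize PP q (-(q:ℂ)) = M at *
  generalize EE (q ^ 5) = E5 at *
  generalize EE q = E1 at *
  have f' : E1 ^ 2 * M ^ 4 = q * E5 ^ 2 * N ^ 4 + E5 ^ 2 * (a1 * a2 * a3 * a4) := by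
    linear_combination f / 4
  have f'' : E1 ^ 2 * M ^ 4 * N = q * E5 ^ 2 * N ^ 5 + E5 ^ 2 * M := by
    linear_combination N * f' - E5 ^ 2 * dd
  linear_combination E1 ^ 2 * E5 ^ 3 * f''


theorem stmt_11 (q : ℝ) (hq0 : 0 < q) (hq1 : q < 1) :
    HasDerivAt (fun x : ℝ => -((1 + ramK x ^ 2) / (1 + ramK x - ramK x ^ 2)))
      (eulerE q ^ 8 * eulerE (q ^ 10) ^ 3 / eulerE (q ^ 2) ^ 7) q := by
  have pw : ∀ n : ℕ, n ≠ 0 → 0 < q ^ n ∧ q ^ n < 1 := fun n hn =>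
    ⟨by positivity, pow_lt_one₀ hq0.le hq1 hn⟩
  have e1 := EE_eq hq0 hq1
  have e2 := EE_eq (pw 2 (by norm_num)).1 (pw 2 (by norm_num)).2
  have e5 := EE_eq (pw 5 (by norm_num)).1 (pw 5 (by norm_num)).2
  have e10 := EE_eq (pw 10 (by norm_num)).1 (pw 10 (by norm_num)).2
  have p1 := eulerE_pos hq0 hq1
  have p2 := eulerE_pos (pw 2 (by norm_num)).1 (pw 2 (by norm_num)).2
  have p5 := eulerE_pos (pw 5 (by norm_num)).1 (pw 5 (by norm_num)).2
  have p10 := eulerE_pos (pw 10 (by norm_num)).1 (pw 10 (by norm_num)).2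
  have A := idA hq0 hq1
  have B := kX hq0 hq1
  have C := idC hq0 hq1
  have D := idD hq0 hq1
  rw [e1, e2, e5, e10] at A B C D
  norm_cast at A B C D
  have hK : 0 < ramK q := by rw [ramK_eq hq0 hq1]; positivity
  have hd := ramK_deriv hq0 hq1
  have key : ∀ {E1 E2 E5 E10 K T : ℝ}, 0 < E1 → 0 < E2 → 0 < E5 → 0 < E10 → 0 < K →
     (1 - T) * E10 ^ 2 = E1 * E2 ^ 2 * E5 ^ 3 →
     (1 - K ^ 2) * (q * E1 * E10 ^ 5) = K * (E2 * E5 ^ 5) →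
     E1 ^ 4 * E5 * E10 ^ 2 = E2 ^ 2 * E5 ^ 5 - 4 * q * E1 * E2 * E10 ^ 5 → 
     E2 ^ 4 * E5 ^ 2 * E10 = q * E1 ^ 2 * E10 ^ 5 + E1 * E2 * E5 ^ 5 →
     (1 + K - K ^ 2) ≠ 0 ∧ 
     (1 - 4 * K - K ^ 2) * (K * (1 - T) / q) / (1 + K - K ^ 2) ^ 2 = E1 ^ 8 * E10 ^ 3 / E2 ^ 7 := by
    intro E1 E2 E5 E10 K T h1 h2 h5 h10 hK A B C D
    have a : 1 - T = E1 * E2 ^ 2 * E5 ^ 3 / E10 ^ 2 := by field_simp; linarith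
    have c : 1 - 4 * K - K ^ 2 = K * (E1 ^ 3 * E5 / (q * E2 * E10 ^ 3)) := by
      rw [mul_div_assoc', eq_div_iff (by positivity)]
      have : 0 < E1 * E10 ^ 2 := by positivity
      apply mul_left_cancel₀ this.ne'
      linear_combination E2 * B - K * C
    have d : 1 + K - K ^ 2 = K * (E2 ^ 4 * E5 ^ 2 / (q * E1 ^ 2 * E10 ^ 4)) := by
      rw [mul_div_assoc', eq_div_iff (by positivity)]
      apply mul_left_cancel₀ h10.ne'
      linear_combination E1 * B - K * D
    constructor
    · rw [d]; positivity
    · rw [a, c, d]; field_simp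
  obtain ⟨k1, k2⟩ := key p1 p2 p5 p10 hK A B (by linarith) (by linarith)
  rw [← k2]
  have h := (((hd.pow 2).const_add 1).div ((hd.const_add 1).sub (hd.pow 2)) k1).neg
  refine h.congr_deriv ?_
  simp only [Pi.pow_apply, Pi.sub_apply]
  push_cast
  field_simp
  ring
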